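/- Assume 0 ≤ α < N, p > 0, ρ > 0, that the Dirichlet eigenpair hypothesis holds for (Ω, λ₁, φ), that μ ≤ C_{H,Ω}, and that q satisfies (q − 1)·|γ_*| > max{0, 2 − α} (equivalently, q > 1 + max{0, (2−α)/|γ_*|}). Then the inequality (E): −Δu − μ|x|^{−2}u ≥ (|x|^{−α} * u^p) u^q has a positive solution in C_Ω^ρ if and only if p·|γ_*| > N − α and (p + q − 1)·|γ_*| > N − α + 2. -/

import Mathlib

open MeasureTheory Real Set
open scoped ENNReal NNReal

noncomputable section

/-- Euclidean space `ℝ^N`. -/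
abbrev Euc (N : ℕ) := EuclideanSpace ℝ (Fin N)

/-- The Euclidean Laplacian `Δu(x) = ∑ ∂²u/∂xᵢ²(x)`, the trace of the Hessian. -/
def lap (N : ℕ) (u : Euc N → ℝ) (x : Euc N) : ℝ :=
  ∑ i : Fin N,
    iteratedFDeriv ℝ 2 u x ![EuclideanSpace.single i 1, EuclideanSpace.single i 1]

/-- The open cone `C_Ω^ρ = {x : |x| > ρ, x/|x| ∈ Ω}`. -/
def coneGT (N : ℕ) (ρ : ℝ) (Ω : Set (Euc N)) : Set (Euc N) :=
  {x | ρ < ‖x‖ ∧ ‖x‖⁻¹ • x ∈ Ω}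

/-- The full open cone `C_Ω = {x ≠ 0 : x/|x| ∈ Ω}`. -/
def cone (N : ℕ) (Ω : Set (Euc N)) : Set (Euc N) :=
  {x | x ≠ 0 ∧ ‖x‖⁻¹ • x ∈ Ω}

/-- `Ω` is a nonempty, connected, relatively open subset of the unit sphere `S^{N-1}`. -/
def IsConeDomain (N : ℕ) (Ω : Set (Euc N)) : Prop :=
  Ω ⊆ Metric.sphere (0 : Euc N) 1 ∧ IsConnected Ω ∧
    IsOpen {ω : Metric.sphere (0 : Euc N) 1 | (ω : Euc N) ∈ Ω}

/-- The convolution `(|x|^{-α} * f)(x) = ∫_{C_Ω^ρ} f(y)|x-y|^{-α} dy`, valued in `[0,∞]`. -/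
def rieszConv (N : ℕ) (α ρ : ℝ) (Ω : Set (Euc N)) (f : Euc N → ℝ) (x : Euc N) : ℝ≥0∞ :=
  ∫⁻ y in coneGT N ρ Ω, ENNReal.ofReal (f y * ‖x - y‖ ^ (-α))

/-- Dirichlet eigenpair hypothesis for `(Ω, λ₁, φ)`: `φ` is continuous on the closure of `Ω`,
positive on `Ω`, vanishing on the relative boundary, with maximum `1`, and its 0-homogeneous
extension `Φ(x) = φ(x/|x|)` is `C²` on the open cone and satisfies `ΔΦ = -λ₁|x|⁻²Φ`. -/
structure DirichletEigenpair (N : ℕ) (Ω : Set (Euc N)) (lam1 : ℝ) (φ : Euc N → ℝ) : Prop where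
  contOn : ContinuousOn φ (closure Ω)
  pos : ∀ ω ∈ Ω, 0 < φ ω
  bdryZero : ∀ ω ∈ closure Ω \ Ω, φ ω = 0
  le_one : ∀ ω ∈ closure Ω, φ ω ≤ 1
  max_one : ∃ ω ∈ closure Ω, φ ω = 1
  smoothExt : ContDiffOn ℝ 2 (fun x => φ (‖x‖⁻¹ • x)) (cone N Ω)
  eigen : ∀ x ∈ cone N Ω,
    lap N (fun y => φ (‖y‖⁻¹ • y)) x = -lam1 * ‖x‖ ^ (-(2:ℝ)) * φ (‖x‖⁻¹ • x)

/-- The Hardy constant `C_{H,Ω} = λ₁ + ((N-2)/2)²`. -/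
def CHconst (N : ℕ) (lam1 : ℝ) : ℝ := lam1 + (((N : ℝ) - 2) / 2) ^ 2

/-- The smaller root `γ_*` of `γ(γ + N - 2) = λ₁ - μ`. -/
def gammaStar (N : ℕ) (lam1 μ : ℝ) : ℝ :=
  (-((N : ℝ) - 2) - Real.sqrt (((N : ℝ) - 2) ^ 2 + 4 * (lam1 - μ))) / 2

/-- A positive (classical) solution of `(E) : -Δu - μ|x|⁻²u ≥ (|x|^{-α} * uᵖ) u^q` in `C_Ω^ρ`. -/
def IsPosSolE (N : ℕ) (ρ μ α p q : ℝ) (Ω : Set (Euc N)) (u : Euc N → ℝ) : Prop :=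
  ContDiffOn ℝ 2 u (coneGT N ρ Ω) ∧
  ContinuousOn u (closure (coneGT N ρ Ω)) ∧
  (∀ x ∈ coneGT N ρ Ω, 0 < u x) ∧
  (∀ x ∈ coneGT N ρ Ω, rieszConv N α ρ Ω (fun y => u y ^ p) x < ⊤) ∧
  (∀ x ∈ coneGT N ρ Ω,
    (rieszConv N α ρ Ω (fun y => u y ^ p) x).toReal * u x ^ q ≤
      -lap N u x - μ * ‖x‖ ^ (-(2:ℝ)) * u x)

/-- A positive solution of `(Z) : -Δu - μ|x|⁻²u ≥ (∫_{C_Ω^ρ} uᵖ) u^q` in `C_Ω^ρ`. -/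
def IsPosSolZ (N : ℕ) (ρ μ p q : ℝ) (Ω : Set (Euc N)) (u : Euc N → ℝ) : Prop :=
  ContDiffOn ℝ 2 u (coneGT N ρ Ω) ∧
  ContinuousOn u (closure (coneGT N ρ Ω)) ∧
  (∀ x ∈ coneGT N ρ Ω, 0 < u x) ∧
  (∫⁻ y in coneGT N ρ Ω, ENNReal.ofReal (u y ^ p)) < ⊤ ∧
  (∀ x ∈ coneGT N ρ Ω,
    (∫⁻ y in coneGT N ρ Ω, ENNReal.ofReal (u y ^ p)).toReal * u x ^ q ≤
      -lap N u x - μ * ‖x‖ ^ (-(2:ℝ)) * u x)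

/-- A positive solution `(u, v)` of the system `(S)` in `C_Ω^ρ`. -/
def IsPosSolS (N : ℕ) (ρ μ α p q s : ℝ) (Ω : Set (Euc N)) (u v : Euc N → ℝ) : Prop :=
  ContDiffOn ℝ 2 u (coneGT N ρ Ω) ∧ ContinuousOn u (closure (coneGT N ρ Ω)) ∧
  ContDiffOn ℝ 2 v (coneGT N ρ Ω) ∧ ContinuousOn v (closure (coneGT N ρ Ω)) ∧
  (∀ x ∈ coneGT N ρ Ω, 0 < u x) ∧ (∀ x ∈ coneGT N ρ Ω, 0 < v x) ∧
  (∀ x ∈ coneGT N ρ Ω, rieszConv N α ρ Ω (fun y => v y ^ p) x < ⊤) ∧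
  (∀ x ∈ coneGT N ρ Ω,
    (rieszConv N α ρ Ω (fun y => v y ^ p) x).toReal * v x ^ q ≤
      -lap N u x - μ * ‖x‖ ^ (-(2:ℝ)) * u x) ∧
  (∀ x ∈ coneGT N ρ Ω, u x ^ s ≤ -lap N v x - μ * ‖x‖ ^ (-(2:ℝ)) * v x)

/-!
Let `γ = γ_* < 0`, so that `|x| ^ γ Φ` is annihilated by the Hardy operator `-Δ - μ / |x| ^ 2`.

*Necessity.* Half the harmonic mean `v` of a solution `u` and of `|x| ^ γ Φ` is again a positive
supersolution of the Hardy operator, with `v ≤ u` and `v ≤ |x| ^ γ`. Testing it against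
`|x| ^ (2 - N - γ) Φ χ(log |x|)`, with a convex cutoff of `Φ` near the boundary of the cone, shows
that the mean of `|x| ^ (-γ) v` over logarithmic annuli satisfies a second-order differential
inequality in `t = log |x|` which keeps it away from `0`. As `|x| ^ (-γ) v ≤ 1`, this means that
`u ≥ c |x| ^ γ` on a fixed proportion of each annulus. Finiteness of the convolution then forces
`p |γ| > N - α`, and the convolution is at least `c |x| ^ (N - α - p |γ|)`. Inserting this into
the equation and using Jensen's inequality, the `Φ`-weighted mean `H` of `|x| ^ (-γ) u` satisfies
`H'' ≤ D H' - c H ^ q`, which no positive function on a half-line does, unless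
`(p + q - 1) |γ| > N - α + 2`.

*Sufficiency.* The Riesz potential of `|x| ^ (-p |γ|)` outside a ball decays like `|x| ^ (-β)` for
some `β` with `ε = β + (q - 1) |γ| - 2 > 0`, so that a small multiple of
`|x| ^ γ Φ - ρ ^ ε |x| ^ (γ - ε) Φ` is a solution.
-/

section

open Filter Topology InnerProductSpace
open scoped Laplacian Gradient RealInnerProductSpace

section Laplacian

section NormedSpace

variable {E : Type*} [NormedAddCommGroup E] [NormedSpace ℝ E]

lemma eventually_contDiffAt_two {f : E → ℝ} {x : E} (hf : ContDiffAt ℝ 2 f x) :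
    ∀ᶠ y in 𝓝 x, ContDiffAt ℝ 2 f y :=
  hf.eventually (by simp)

lemma differentiableAt_fderiv_apply {f : E → ℝ} {x : E} (hf : ContDiffAt ℝ 2 f x) (v : E) :
    DifferentiableAt ℝ (fun y => fderiv ℝ f y v) x :=
  ((hf.fderiv_right (m := 1) (by norm_num)).differentiableAt one_ne_zero).clm_apply
    (differentiableAt_const _)

end NormedSpace

lemma log_norm_eq_half_mul_log_norm_sq {E : Type*} [NormedAddCommGroup E] :
    (fun y : E => Real.log ‖y‖) = fun y : E => 1 / 2 * Real.log (‖y‖ ^ 2) := by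
  ext y; rw [Real.log_pow]; push_cast; ring

variable {E : Type*} [NormedAddCommGroup E] [InnerProductSpace ℝ E]

lemma gradient_fun_add [CompleteSpace E] {f g : E → ℝ} {x : E} (hf : DifferentiableAt ℝ f x)
    (hg : DifferentiableAt ℝ g x) : ∇ (fun y => f y + g y) x = ∇ f x + ∇ g x := by
  simp only [gradient, fderiv_fun_add hf hg, map_add]

lemma gradient_mul [CompleteSpace E] {f g : E → ℝ} {x : E} (hf : DifferentiableAt ℝ f x)
    (hg : DifferentiableAt ℝ g x) :
    ∇ (fun y => f y * g y) x = f x • ∇ g x + g x • ∇ f x := by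
  simp only [gradient, fderiv_fun_mul hf hg, map_add, map_smul]

lemma gradient_comp_real [CompleteSpace E] {F : ℝ → ℝ} {f : E → ℝ} {x : E}
    (hF : DifferentiableAt ℝ F (f x)) (hf : DifferentiableAt ℝ f x) :
    ∇ (fun y => F (f y)) x = deriv F (f x) • ∇ f x := by
  have hcomp := (hF.hasDerivAt.comp_hasFDerivAt x hf.hasFDerivAt).fderiv
  simp only [Function.comp_def] at hcomp
  simp only [gradient, hcomp, map_smul]

lemma gradient_norm_sq [CompleteSpace E] (x : E) : ∇ (fun y : E => ‖y‖ ^ 2) x = (2 : ℝ) • x := by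
  refine HasGradientAt.gradient (hasGradientAt_iff_hasFDerivAt.2 ?_)
  have htoDual : toDual ℝ E ((2 : ℝ) • x) = (2 : ℕ) • innerSL ℝ x := by ext v; simp
  exact htoDual ▸ (hasStrictFDerivAt_norm_sq x).hasFDerivAt

lemma gradient_log_norm [CompleteSpace E] {x : E} (hx : x ≠ 0) :
    ∇ (fun y : E => Real.log ‖y‖) x = (‖x‖ ^ 2)⁻¹ • x := by
  have hx2 : ‖x‖ ^ 2 ≠ 0 := by simpa using hx
  have hderiv : HasDerivAt (fun s => 1 / 2 * Real.log s) (1 / 2 * (‖x‖ ^ 2)⁻¹) (‖x‖ ^ 2) :=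
    (Real.hasDerivAt_log hx2).const_mul _
  rw [log_norm_eq_half_mul_log_norm_sq, gradient_comp_real (F := fun s => 1 / 2 * Real.log s)
    (f := fun y : E => ‖y‖ ^ 2) hderiv.differentiableAt
    ((contDiff_norm_sq ℝ (n := 1)).differentiable one_ne_zero x), hderiv.deriv,
    gradient_norm_sq, smul_smul]
  congr 1; ring

lemma contDiffAt_log_norm {n : WithTop ℕ∞} {x : E} (hx : x ≠ 0) :
    ContDiffAt ℝ n (fun y : E => Real.log ‖y‖) x :=
  (contDiffAt_norm ℝ hx).log (norm_ne_zero_iff.2 hx)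

variable [FiniteDimensional ℝ E] {f g : E → ℝ} {x : E}

lemma laplacian_eq_sum_fderiv_fderiv {ι : Type*} [Fintype ι] (b : OrthonormalBasis ι ℝ E)
    (hf : ContDiffAt ℝ 2 f x) :
    Δ f x = ∑ i, fderiv ℝ (fun y => fderiv ℝ f y (b i)) x (b i) := by
  have hf' : DifferentiableAt ℝ (fderiv ℝ f) x :=
    (hf.fderiv_right (m := 1) (by norm_num)).differentiableAt one_ne_zero
  simp only [laplacian_eq_iteratedFDeriv_orthonormalBasis f b, iteratedFDeriv_two_apply,
    fderiv_clm_apply hf' (differentiableAt_const _)]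
  simp

lemma laplacian_mul (hf : ContDiffAt ℝ 2 f x) (hg : ContDiffAt ℝ 2 g x) :
    Δ (fun y => f y * g y) x = f x * Δ g x + g x * Δ f x + 2 * ⟪∇ f x, ∇ g x⟫_ℝ := by
  set b := stdOrthonormalBasis ℝ E
  have hf₁ := hf.differentiableAt two_ne_zero
  have hg₁ := hg.differentiableAt two_ne_zero
  have hfirst (i) : (fun y => fderiv ℝ (fun z => f z * g z) y (b i)) =ᶠ[𝓝 x]
      fun y => f y * fderiv ℝ g y (b i) + g y * fderiv ℝ f y (b i) := by
    filter_upwards [eventually_contDiffAt_two hf, eventually_contDiffAt_two hg] with y hfy hgy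
    simp [fderiv_fun_mul (hfy.differentiableAt two_ne_zero) (hgy.differentiableAt two_ne_zero)]
  have hsecond (i) : fderiv ℝ (fun y => fderiv ℝ (fun z => f z * g z) y (b i)) x (b i) =
      f x * fderiv ℝ (fun y => fderiv ℝ g y (b i)) x (b i) +
      g x * fderiv ℝ (fun y => fderiv ℝ f y (b i)) x (b i) +
      2 * (⟪∇ f x, b i⟫_ℝ * ⟪b i, ∇ g x⟫_ℝ) := by
    have hf₂ := differentiableAt_fderiv_apply hf (b i)
    have hg₂ := differentiableAt_fderiv_apply hg (b i)
    rw [(hfirst i).fderiv_eq, fderiv_fun_add (hf₁.fun_mul hg₂) (hg₁.fun_mul hf₂),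
      fderiv_fun_mul hf₁ hg₂, fderiv_fun_mul hg₁ hf₂, real_inner_comm (∇ g x) (b i),
      inner_gradient_left, inner_gradient_left]
    simp only [add_apply, smul_apply, smul_eq_mul]
    ring
  rw [laplacian_eq_sum_fderiv_fderiv b (hf.mul hg), laplacian_eq_sum_fderiv_fderiv b hf,
    laplacian_eq_sum_fderiv_fderiv b hg, ← b.sum_inner_mul_inner, Finset.mul_sum, Finset.mul_sum,
    Finset.mul_sum, ← Finset.sum_add_distrib, ← Finset.sum_add_distrib]
  exact Finset.sum_congr rfl fun i _ => hsecond i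

lemma laplacian_comp_real {F : ℝ → ℝ} (hF : ContDiffAt ℝ 2 F (f x)) (hf : ContDiffAt ℝ 2 f x) :
    Δ (fun y => F (f y)) x =
      deriv (deriv F) (f x) * ‖∇ f x‖ ^ 2 + deriv F (f x) * Δ f x := by
  set b := stdOrthonormalBasis ℝ E
  have hF' : DifferentiableAt ℝ (deriv F) (f x) := differentiableAt_fderiv_apply hF 1
  have hf₁ := hf.differentiableAt two_ne_zero
  have hF'f := hF'.hasDerivAt.comp_hasFDerivAt x hf₁.hasFDerivAt
  have hfirst (i) : (fun y => fderiv ℝ (fun z => F (f z)) y (b i)) =ᶠ[𝓝 x]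
      fun y => deriv F (f y) * fderiv ℝ f y (b i) := by
    filter_upwards [eventually_contDiffAt_two hf,
      hf.continuousAt.eventually (eventually_contDiffAt_two hF)] with y hfy hFy
    have hcomp := ((hFy.differentiableAt two_ne_zero).hasDerivAt.comp_hasFDerivAt y
      (hfy.differentiableAt two_ne_zero).hasFDerivAt).fderiv
    simp only [Function.comp_def] at hcomp
    simp [hcomp]
  have hsecond (i) : fderiv ℝ (fun y => fderiv ℝ (fun z => F (f z)) y (b i)) x (b i) =
      deriv (deriv F) (f x) * (⟪∇ f x, b i⟫_ℝ * ⟪b i, ∇ f x⟫_ℝ) +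
      deriv F (f x) * fderiv ℝ (fun y => fderiv ℝ f y (b i)) x (b i) := by
    have hprod := (hF'f.mul (differentiableAt_fderiv_apply hf (b i)).hasFDerivAt).fderiv
    simp only [Function.comp_def, Pi.mul_def] at hprod
    rw [(hfirst i).fderiv_eq, hprod, real_inner_comm (∇ f x) (b i), inner_gradient_left]
    simp only [add_apply, smul_apply, smul_eq_mul]
    ring
  rw [laplacian_eq_sum_fderiv_fderiv b (f := fun y => F (f y)) (hF.comp x hf),
    laplacian_eq_sum_fderiv_fderiv b hf, ← real_inner_self_eq_norm_sq, ← b.sum_inner_mul_inner,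
    Finset.mul_sum, Finset.mul_sum, ← Finset.sum_add_distrib]
  exact Finset.sum_congr rfl fun i _ => hsecond i

lemma laplacian_norm_sq (x : E) : Δ (fun y : E => ‖y‖ ^ 2) x = 2 * Module.finrank ℝ E := by
  set b := stdOrthonormalBasis ℝ E
  have hfirst (i) : (fun y => fderiv ℝ (fun z : E => ‖z‖ ^ 2) y (b i)) =
      ⇑((2 : ℝ) • innerSL ℝ (b i)) := by
    ext y
    rw [← inner_gradient_left, gradient_norm_sq, inner_smul_left, real_inner_comm]
    simp
  simp_rw [laplacian_eq_sum_fderiv_fderiv b (contDiff_norm_sq ℝ).contDiffAt, hfirst,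
    ContinuousLinearMap.fderiv]
  simp [mul_comm]

lemma laplacian_log_norm (hx : x ≠ 0) :
    Δ (fun y : E => Real.log ‖y‖) x = (Module.finrank ℝ E - 2) / ‖x‖ ^ 2 := by
  have hx2 : ‖x‖ ^ 2 ≠ 0 := by simpa using hx
  have hsq : ContDiff ℝ 2 fun y : E => ‖y‖ ^ 2 := contDiff_norm_sq ℝ
  have hderiv : deriv (fun s => 1 / 2 * Real.log s) = fun s => 1 / 2 * s⁻¹ := by
    ext s; simp
  rw [log_norm_eq_half_mul_log_norm_sq,
    laplacian_comp_real (F := fun s => 1 / 2 * Real.log s) (f := fun y : E => ‖y‖ ^ 2)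
      (contDiffAt_const.mul (contDiffAt_log.2 hx2)) hsq.contDiffAt, hderiv, gradient_norm_sq,
    laplacian_norm_sq, norm_smul]
  simp only [deriv_const_mul_field', deriv_inv', Real.norm_ofNat]
  field_simp
  ring

end Laplacian

section HalfHarmonic

/-- Half the harmonic mean, a smooth substitute for the minimum of two positive functions. -/
def halfHarmonic {X : Type*} (f g : X → ℝ) (y : X) : ℝ := f y * g y / (f y + g y)

section Order

variable {X : Type*} {f g : X → ℝ} {x : X}

lemma halfHarmonic_pos (hf : 0 < f x) (hg : 0 < g x) : 0 < halfHarmonic f g x :=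
  div_pos (mul_pos hf hg) (add_pos hf hg)

lemma halfHarmonic_le_left (hf : 0 < f x) (hg : 0 < g x) :
    halfHarmonic f g x ≤ f x :=
  div_le_of_le_mul₀ (add_pos hf hg).le hf.le (by nlinarith)

lemma halfHarmonic_le_right (hf : 0 < f x) (hg : 0 < g x) :
    halfHarmonic f g x ≤ g x :=
  div_le_of_le_mul₀ (add_pos hf hg).le hg.le (by nlinarith)

end Order

lemma halfHarmonic_mul_add_eventuallyEq {X : Type*} [TopologicalSpace X] {f g : X → ℝ} {x : X}
    (hf : ContinuousAt f x) (hg : ContinuousAt g x)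
    (hfg : f x + g x ≠ 0) :
    (fun y => halfHarmonic f g y * (f y + g y)) =ᶠ[𝓝 x] fun y => f y * g y := by
  filter_upwards [(hf.add hg).eventually_ne hfg] with y hy
  exact div_mul_cancel₀ _ hy

lemma contDiffAt_halfHarmonic {E : Type*} [NormedAddCommGroup E] [NormedSpace ℝ E] {f g : E → ℝ}
    {x : E} (hf : ContDiffAt ℝ 2 f x) (hg : ContDiffAt ℝ 2 g x)
    (hfg : f x + g x ≠ 0) : ContDiffAt ℝ 2 (halfHarmonic f g) x :=
  (hf.mul hg).div (hf.add hg) hfg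

variable {E : Type*} [NormedAddCommGroup E] [InnerProductSpace ℝ E] {f g : E → ℝ} {x : E}

lemma gradient_halfHarmonic [CompleteSpace E] (hf : ContDiffAt ℝ 2 f x) (hg : ContDiffAt ℝ 2 g x)
    (hfg : f x + g x ≠ 0) :
    ∇ (halfHarmonic f g) x =
      (g x / (f x + g x)) ^ 2 • ∇ f x + (f x / (f x + g x)) ^ 2 • ∇ g x := by
  have hf₁ := hf.differentiableAt two_ne_zero
  have hg₁ := hg.differentiableAt two_ne_zero
  have hprod := (halfHarmonic_mul_add_eventuallyEq hf.continuousAt hg.continuousAt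
    hfg).gradient_eq
  rw [gradient_mul ((contDiffAt_halfHarmonic hf hg hfg).differentiableAt two_ne_zero)
    (hf₁.fun_add hg₁), gradient_mul hf₁ hg₁, gradient_fun_add hf₁ hg₁,
    ← eq_sub_iff_add_eq'] at hprod
  refine smul_right_injective E hfg (hprod.trans ?_)
  simp only [halfHarmonic]
  match_scalars <;> field_simp <;> ring

lemma laplacian_halfHarmonic [FiniteDimensional ℝ E] (hf : ContDiffAt ℝ 2 f x)
    (hg : ContDiffAt ℝ 2 g x) (hfg : f x + g x ≠ 0) :
    Δ (halfHarmonic f g) x =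
      (g x / (f x + g x)) ^ 2 * Δ f x + (f x / (f x + g x)) ^ 2 * Δ g x -
        2 * ‖g x • ∇ f x - f x • ∇ g x‖ ^ 2 / (f x + g x) ^ 3 := by
  have hf₁ := hf.differentiableAt two_ne_zero
  have hg₁ := hg.differentiableAt two_ne_zero
  have hprod := (laplacian_congr_nhds (halfHarmonic_mul_add_eventuallyEq hf.continuousAt
    hg.continuousAt hfg)).eq_of_nhds
  have hlap : Δ (fun y => f y + g y) x = Δ f x + Δ g x := hf.laplacian_add hg
  rw [laplacian_mul (contDiffAt_halfHarmonic hf hg hfg) (hf.add hg), laplacian_mul hf hg, hlap,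
    gradient_fun_add hf₁ hg₁, gradient_halfHarmonic hf hg hfg] at hprod
  simp only [inner_add_left, inner_add_right, real_inner_smul_left, real_inner_self_eq_norm_sq,
    real_inner_comm (∇ f x) (∇ g x)] at hprod
  rw [norm_sub_sq_real, norm_smul, norm_smul, mul_pow, mul_pow, Real.norm_eq_abs,
    Real.norm_eq_abs, sq_abs, sq_abs, real_inner_smul_left, real_inner_smul_right]
  refine mul_left_cancel₀ hfg ?_
  simp only [halfHarmonic] at hprod ⊢
  field_simp at hprod ⊢
  linear_combination hprod

lemma laplacian_halfHarmonic_le [FiniteDimensional ℝ E] (hf : ContDiffAt ℝ 2 f x)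
    (hg : ContDiffAt ℝ 2 g x) (hfg : 0 < f x + g x) :
    Δ (halfHarmonic f g) x ≤
      (g x / (f x + g x)) ^ 2 * Δ f x + (f x / (f x + g x)) ^ 2 * Δ g x := by
  rw [laplacian_halfHarmonic hf hg hfg.ne']
  exact sub_le_self _ (by positivity)

end HalfHarmonic

section Green

lemma integrable_mul_of_tsupport_subset {X : Type*} [TopologicalSpace X] [MeasurableSpace X]
    [OpensMeasurableSpace X] {μ : Measure X} [IsFiniteMeasureOnCompacts μ] {T v : X → ℝ}
    {U : Set X} (hT : Continuous T) (hTc : HasCompactSupport T) (hTU : tsupport T ⊆ U)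
    (hU : IsOpen U) (hv : ContinuousOn v U) :
    Integrable (fun x => T x * v x) μ := by
  have hcont : Continuous fun x => T x * v x := continuous_of_tsupport fun x hx =>
    hT.continuousAt.mul (hv.continuousAt (hU.mem_nhds (hTU (tsupport_mul_subset_left hx))))
  exact hcont.integrable_of_hasCompactSupport hTc.mul_right

variable {E : Type*} [NormedAddCommGroup E] [NormedSpace ℝ E] {T v : E → ℝ} {U : Set E}

lemma contDiff_of_contDiffOn_of_tsupport_subset {n : WithTop ℕ∞} (hU : IsOpen U)
    (hT : ContDiffOn ℝ n T U) (hTU : tsupport T ⊆ U) : ContDiff ℝ n T := by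
  refine contDiff_iff_contDiffAt.2 fun x => ?_
  by_cases hx : x ∈ tsupport T
  · exact hT.contDiffAt (hU.mem_nhds (hTU hx))
  · exact contDiffAt_const.congr_of_eventuallyEq (notMem_tsupport_iff_eventuallyEq.1 hx)

lemma contDiffOn_fderiv_apply (hU : IsOpen U) (hv : ContDiffOn ℝ 2 v U) (e : E) :
    ContDiffOn ℝ 1 (fun y => fderiv ℝ v y e) U :=
  (hv.fderiv_of_isOpen hU (by norm_num)).clm_apply contDiffOn_const

lemma continuousOn_fderiv_fderiv_apply (hU : IsOpen U) (hv : ContDiffOn ℝ 2 v U) (e : E) :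
    ContinuousOn (fun x => fderiv ℝ (fun y => fderiv ℝ v y e) x e) U :=
  ((contDiffOn_fderiv_apply hU hv e).continuousOn_fderiv_of_isOpen hU le_rfl).clm_apply
    continuousOn_const

variable [MeasurableSpace E] [BorelSpace E] {μ : Measure E}

lemma integrable_fderiv_fderiv_mul [IsFiniteMeasureOnCompacts μ] (hU : IsOpen U)
    (hT : ContDiff ℝ 2 T) (hTc : HasCompactSupport T) (hTU : tsupport T ⊆ U)
    (hv : ContinuousOn v U) (e : E) :
    Integrable (fun x => fderiv ℝ (fun y => fderiv ℝ T y e) x e * v x) μ := by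
  have hsupp := (tsupport_fderiv_apply_subset ℝ (f := fun y => fderiv ℝ T y e) e).trans
    (tsupport_fderiv_apply_subset ℝ e)
  have hcont := continuousOn_fderiv_fderiv_apply isOpen_univ hT.contDiffOn e
  exact integrable_mul_of_tsupport_subset (continuousOn_univ.1 hcont)
    ((hTc.fderiv_apply ℝ e).fderiv_apply ℝ e) (hsupp.trans hTU) hU hv

variable [FiniteDimensional ℝ E] [μ.IsAddHaarMeasure]

lemma integral_mul_fderiv_fderiv_comm (hU : IsOpen U) (hT : ContDiff ℝ 2 T)
    (hTc : HasCompactSupport T) (hTU : tsupport T ⊆ U) (hv : ContDiffOn ℝ 2 v U) (e : E) :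
    ∫ x, T x * fderiv ℝ (fun y => fderiv ℝ v y e) x e ∂μ =
      ∫ x, fderiv ℝ (fun y => fderiv ℝ T y e) x e * v x ∂μ := by
  have hT₁ := contDiffOn_univ.1 (contDiffOn_fderiv_apply isOpen_univ hT.contDiffOn e)
  have hv₁ := contDiffOn_fderiv_apply hU hv e
  have hsupp := (tsupport_fderiv_apply_subset ℝ (f := T) e).trans hTU
  have hint {w : E → ℝ} (hw : ContinuousOn w U) := integrable_mul_of_tsupport_subset (μ := μ)
    hT.continuous hTc hTU hU hw
  have hint₁ {w : E → ℝ} (hw : ContinuousOn w U) := integrable_mul_of_tsupport_subset (μ := μ)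
    hT₁.continuous (hTc.fderiv_apply ℝ e) hsupp hU hw
  rw [integral_mul_fderiv_eq_neg_fderiv_mul_of_integrable (hint₁ hv₁.continuousOn)
      (hint (continuousOn_fderiv_fderiv_apply hU hv e)) (hint hv₁.continuousOn)
      (fun x _ => hT.differentiable two_ne_zero x)
      (fun x hx => (hv₁.contDiffAt (hU.mem_nhds (hTU hx))).differentiableAt one_ne_zero),
    integral_mul_fderiv_eq_neg_fderiv_mul_of_integrable
      (integrable_fderiv_fderiv_mul hU hT hTc hTU hv.continuousOn e) (hint₁ hv₁.continuousOn)
      (hint₁ hv.continuousOn) (fun x _ => hT₁.differentiable one_ne_zero x)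
      (fun x hx => (hv.contDiffAt (hU.mem_nhds (hsupp hx))).differentiableAt two_ne_zero),
    neg_neg]

lemma integral_mul_laplacian_comm {E : Type*} [NormedAddCommGroup E] [InnerProductSpace ℝ E]
    [FiniteDimensional ℝ E] [MeasurableSpace E] [BorelSpace E] {μ : Measure E}
    [μ.IsAddHaarMeasure] {T v : E → ℝ} {U : Set E} (hU : IsOpen U) (hT : ContDiff ℝ 2 T)
    (hTc : HasCompactSupport T) (hTU : tsupport T ⊆ U) (hv : ContDiffOn ℝ 2 v U) :
    ∫ x, T x * Δ v x ∂μ = ∫ x, Δ T x * v x ∂μ := by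
  set b := stdOrthonormalBasis ℝ E
  have hleft : (fun x => T x * Δ v x) =
      fun x => ∑ i, T x * fderiv ℝ (fun y => fderiv ℝ v y (b i)) x (b i) := by
    ext x
    by_cases hx : x ∈ tsupport T
    · rw [laplacian_eq_sum_fderiv_fderiv b (hv.contDiffAt (hU.mem_nhds (hTU hx))),
        Finset.mul_sum]
    · simp [image_eq_zero_of_notMem_tsupport hx]
  have hright : (fun x => Δ T x * v x) =
      fun x => ∑ i, fderiv ℝ (fun y => fderiv ℝ T y (b i)) x (b i) * v x := by
    ext x
    rw [laplacian_eq_sum_fderiv_fderiv b hT.contDiffAt, Finset.sum_mul]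
  rw [hleft, hright, integral_finsetSum _ fun i _ => ?_, integral_finsetSum _ fun i _ => ?_]
  · exact Finset.sum_congr rfl fun i _ => integral_mul_fderiv_fderiv_comm hU hT hTc hTU hv (b i)
  · exact integrable_fderiv_fderiv_mul hU hT hTc hTU hv.continuousOn (b i)
  · exact integrable_mul_of_tsupport_subset hT.continuous hTc hTU hU
      (continuousOn_fderiv_fderiv_apply hU hv (b i))

end Green

section HomogeneousExtension

lemma norm_rpow_eq_exp_mul_log {E : Type*} [NormedAddCommGroup E] {x : E} (hx : x ≠ 0) (k : ℝ) :
    ‖x‖ ^ k = Real.exp (k * Real.log ‖x‖) := by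
  rw [mul_comm, Real.rpow_def_of_pos (norm_pos_iff.2 hx)]

lemma continuousOn_norm_rpow {E : Type*} [NormedAddCommGroup E] {s : Set E} (hs : ∀ x ∈ s, x ≠ 0)
    (k : ℝ) : ContinuousOn (fun x => ‖x‖ ^ k) s :=
  continuous_norm.continuousOn.rpow_const fun x hx => Or.inl (norm_ne_zero_iff.2 (hs x hx))

section Normed

variable {E : Type*} [NormedAddCommGroup E] [NormedSpace ℝ E]

lemma continuousAt_normalize {x : E} (hx : x ≠ 0) :
    ContinuousAt (fun x : E => ‖x‖⁻¹ • x) x :=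
  (continuous_norm.continuousAt.inv₀ (norm_ne_zero_iff.2 hx)).smul continuousAt_id

/-- The `0`-homogeneous extension `x ↦ φ (x / |x|)` of a function on the sphere. -/
def angularExt (φ : E → ℝ) (x : E) : ℝ := φ (‖x‖⁻¹ • x)

/-- The `k`-homogeneous extension `x ↦ |x| ^ k φ (x / |x|)` of a function on the sphere. -/
def homExt (k : ℝ) (φ : E → ℝ) (x : E) : ℝ := ‖x‖ ^ k * angularExt φ x

lemma angularExt_smul (φ : E → ℝ) {c : ℝ} (hc : 0 < c) (x : E) :
    angularExt φ (c • x) = angularExt φ x := by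
  simp only [angularExt, norm_smul, Real.norm_of_nonneg hc.le, smul_smul, mul_inv_rev]
  rw [inv_mul_cancel_right₀ hc.ne']

lemma fderiv_angularExt_self (φ : E → ℝ) (x : E) : fderiv ℝ (angularExt φ) x x = 0 := by
  by_cases hφ : DifferentiableAt ℝ (angularExt φ) x
  · have hray : HasDerivAt (fun c : ℝ => c • x) x 1 := by
      simpa using (hasDerivAt_id (1 : ℝ)).smul_const x
    have hcomp : HasDerivAt (fun c : ℝ => angularExt φ (c • x)) (fderiv ℝ (angularExt φ) x x) 1 :=
      HasFDerivAt.comp_hasDerivAt (l := angularExt φ) 1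
        (by rw [one_smul]; exact hφ.hasFDerivAt) hray
    refine hcomp.unique ((hasDerivAt_const 1 (angularExt φ x)).congr_of_eventuallyEq ?_)
    filter_upwards [lt_mem_nhds (zero_lt_one' ℝ)] with c hc using angularExt_smul φ hc x
  · simp [fderiv_zero_of_not_differentiableAt hφ]

lemma homExt_mul_radial_eventuallyEq {x : E} (hx : x ≠ 0) (k : ℝ) (χ : ℝ → ℝ)
    (ψ : E → ℝ) :
    (fun y => homExt k ψ y * χ (Real.log ‖y‖)) =ᶠ[𝓝 x]
      fun y => Real.exp (k * Real.log ‖y‖) * χ (Real.log ‖y‖) * angularExt ψ y := by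
  filter_upwards [isOpen_ne.mem_nhds hx] with y hy
  rw [homExt, norm_rpow_eq_exp_mul_log hy]
  ring

end Normed

variable {E : Type*} [NormedAddCommGroup E] [InnerProductSpace ℝ E] {x : E} {G : ℝ → ℝ} {ψ : E → ℝ}

lemma contDiffAt_homExt_mul_radial (hx : x ≠ 0) (k : ℝ) {χ : ℝ → ℝ} (hχ : ContDiff ℝ 2 χ)
    (hψ : ContDiffAt ℝ 2 (angularExt ψ) x) :
    ContDiffAt ℝ 2 (fun y => homExt k ψ y * χ (Real.log ‖y‖)) x := by
  have hlog : ContDiffAt ℝ 2 (fun y : E => Real.log ‖y‖) x := contDiffAt_log_norm hx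
  refine ContDiffAt.congr_of_eventuallyEq ?_ (homExt_mul_radial_eventuallyEq hx k χ ψ)
  exact ((contDiffAt_const.mul hlog).exp.mul (hχ.contDiffAt.comp x hlog)).mul hψ

lemma contDiffAt_homExt (hx : x ≠ 0) (k : ℝ) (hψ : ContDiffAt ℝ 2 (angularExt ψ) x) :
    ContDiffAt ℝ 2 (homExt k ψ) x := by
  simpa using contDiffAt_homExt_mul_radial hx k (contDiff_const (c := (1 : ℝ))) hψ

variable [FiniteDimensional ℝ E]

lemma laplacian_radial_mul_angularExt (hx : x ≠ 0) (hG : ContDiffAt ℝ 2 G (Real.log ‖x‖))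
    (hψ : ContDiffAt ℝ 2 (angularExt ψ) x) :
    Δ (fun y => G (Real.log ‖y‖) * angularExt ψ y) x =
      (deriv (deriv G) (Real.log ‖x‖) + (Module.finrank ℝ E - 2) * deriv G (Real.log ‖x‖)) /
        ‖x‖ ^ 2 * angularExt ψ x + G (Real.log ‖x‖) * Δ (angularExt ψ) x := by
  have hlog : ContDiffAt ℝ 2 (fun y : E => Real.log ‖y‖) x := contDiffAt_log_norm hx
  have hradial : ∇ (fun y : E => G (Real.log ‖y‖)) x =
      deriv G (Real.log ‖x‖) • (‖x‖ ^ 2)⁻¹ • x := by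
    rw [← gradient_log_norm hx]
    exact gradient_comp_real (f := fun y : E => Real.log ‖y‖) (hG.differentiableAt two_ne_zero)
      (hlog.differentiableAt two_ne_zero)
  have horth : ⟪x, ∇ (angularExt ψ) x⟫_ℝ = 0 := by
    rw [real_inner_comm, inner_gradient_left, fderiv_angularExt_self]
  rw [laplacian_mul (f := fun y => G (Real.log ‖y‖)) (hG.comp x hlog) hψ,
    laplacian_comp_real (f := fun y : E => Real.log ‖y‖) hG hlog, laplacian_log_norm hx, hradial,
    gradient_log_norm hx, real_inner_smul_left, real_inner_smul_left, horth, norm_smul,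
    norm_inv, norm_pow, norm_norm]
  have hx0 : ‖x‖ ≠ 0 := norm_ne_zero_iff.2 hx
  field_simp
  ring

lemma laplacian_homExt_mul_radial (hx : x ≠ 0) (k : ℝ) {χ : ℝ → ℝ} (hχ : ContDiff ℝ 2 χ)
    (hψ : ContDiffAt ℝ 2 (angularExt ψ) x) :
    Δ (fun y => homExt k ψ y * χ (Real.log ‖y‖)) x =
      homExt (k - 2) ψ x * (deriv (deriv χ) (Real.log ‖x‖) +
        (2 * k + Module.finrank ℝ E - 2) * deriv χ (Real.log ‖x‖) +
        k * (k + Module.finrank ℝ E - 2) * χ (Real.log ‖x‖)) +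
      ‖x‖ ^ k * χ (Real.log ‖x‖) * Δ (angularExt ψ) x := by
  have hexp (t : ℝ) : HasDerivAt (fun t => Real.exp (k * t)) (k * Real.exp (k * t)) t := by
    simpa [mul_comm] using ((hasDerivAt_id t).const_mul k).exp
  have hχ₁ (t) : HasDerivAt χ (deriv χ t) t := (hχ.differentiable two_ne_zero t).hasDerivAt
  have hχ₂ (t) : HasDerivAt (deriv χ) (deriv (deriv χ) t) t :=
    (differentiableAt_fderiv_apply hχ.contDiffAt 1).hasDerivAt
  have hG₁ : deriv (fun t => Real.exp (k * t) * χ t) =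
      fun t => k * Real.exp (k * t) * χ t + Real.exp (k * t) * deriv χ t :=
    deriv_eq fun t => (hexp t).fun_mul (hχ₁ t)
  have hG₂ : deriv (fun t => k * Real.exp (k * t) * χ t + Real.exp (k * t) * deriv χ t) =
      fun t => k * (k * Real.exp (k * t)) * χ t + k * Real.exp (k * t) * deriv χ t +
        (k * Real.exp (k * t) * deriv χ t + Real.exp (k * t) * deriv (deriv χ) t) :=
    deriv_eq fun t => (((hexp t).const_mul k).fun_mul (hχ₁ t)).fun_add ((hexp t).fun_mul (hχ₂ t))
  have hG : ContDiff ℝ 2 fun t => Real.exp (k * t) * χ t :=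
    (contDiff_const.mul contDiff_id).exp.mul hχ
  rw [(laplacian_congr_nhds (homExt_mul_radial_eventuallyEq hx k χ ψ)).eq_of_nhds,
    laplacian_radial_mul_angularExt (G := fun t => Real.exp (k * t) * χ t) hx hG.contDiffAt hψ,
    hG₁, hG₂, homExt, Real.rpow_sub (norm_pos_iff.2 hx), Real.rpow_two,
    norm_rpow_eq_exp_mul_log hx k]
  ring

lemma laplacian_homExt (hx : x ≠ 0) (k : ℝ) (hψ : ContDiffAt ℝ 2 (angularExt ψ) x) :
    Δ (homExt k ψ) x =
      k * (k + Module.finrank ℝ E - 2) * homExt (k - 2) ψ x + ‖x‖ ^ k * Δ (angularExt ψ) x := by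
  have h := laplacian_homExt_mul_radial hx k (contDiff_const (c := (1 : ℝ))) hψ
  simp only [mul_one, deriv_const', mul_zero, zero_add, add_zero] at h
  rw [h, mul_comm]

end HomogeneousExtension

section Cone

variable {N : ℕ} {Ω : Set (Euc N)} {ρ lam1 : ℝ} {φ : Euc N → ℝ} {x : Euc N}

lemma lap_eq_laplacian (u : Euc N → ℝ) : lap N u = Δ u := by
  funext x
  simp [lap, laplacian_eq_iteratedFDeriv_orthonormalBasis u (EuclideanSpace.basisFun (Fin N) ℝ)]

lemma isOpen_cone (hΩ : IsOpen {ω : Metric.sphere (0 : Euc N) 1 | (ω : Euc N) ∈ Ω}) :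
    IsOpen (cone N Ω) := by
  obtain ⟨O, hO, hO_eq⟩ := isOpen_induced_iff.1 hΩ
  have hcone : cone N Ω = {x | x ≠ 0} ∩ (fun x => ‖x‖⁻¹ • x) ⁻¹' O := by
    ext x
    refine and_congr_right fun hx => ?_
    have hmem : ‖x‖⁻¹ • x ∈ Metric.sphere (0 : Euc N) 1 := by simp [norm_smul, hx]
    exact (Set.ext_iff.1 hO_eq ⟨_, hmem⟩).symm
  rw [hcone]
  refine ContinuousOn.isOpen_inter_preimage (fun x hx => ?_) isOpen_ne hO
  exact (continuousAt_normalize hx).continuousWithinAt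

lemma ne_zero_of_mem_coneGT (hρ : 0 < ρ) (hx : x ∈ coneGT N ρ Ω) : x ≠ 0 :=
  norm_pos_iff.1 (hρ.trans hx.1)

lemma coneGT_subset_cone (hρ : 0 < ρ) : coneGT N ρ Ω ⊆ cone N Ω :=
  fun _ hx => ⟨ne_zero_of_mem_coneGT hρ hx, hx.2⟩

lemma coneGT_subset_coneGT {ρ' : ℝ} (h : ρ ≤ ρ') : coneGT N ρ' Ω ⊆ coneGT N ρ Ω :=
  fun _ hx => ⟨h.trans_lt hx.1, hx.2⟩

lemma isOpen_coneGT (hρ : 0 < ρ) (hΩ : IsOpen (cone N Ω)) : IsOpen (coneGT N ρ Ω) := by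
  have heq : coneGT N ρ Ω = cone N Ω ∩ {x | ρ < ‖x‖} :=
    Subset.antisymm (fun _ hx => ⟨coneGT_subset_cone hρ hx, hx.1⟩) fun _ hx => ⟨hx.2, hx.1.2⟩
  rw [heq]
  exact hΩ.inter (isOpen_lt continuous_const continuous_norm)

lemma le_norm_of_mem_closure_coneGT (hx : x ∈ closure (coneGT N ρ Ω)) : ρ ≤ ‖x‖ :=
  closure_minimal (fun _ hy => hy.1.le) (isClosed_le continuous_const continuous_norm) hx

lemma ne_zero_of_mem_closure_coneGT (hρ : 0 < ρ) (hx : x ∈ closure (coneGT N ρ Ω)) : x ≠ 0 :=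
  norm_pos_iff.1 (hρ.trans_le (le_norm_of_mem_closure_coneGT hx))

lemma normalize_mem_closure (hρ : 0 < ρ) (hx : x ∈ closure (coneGT N ρ Ω)) :
    ‖x‖⁻¹ • x ∈ closure Ω :=
  closure_mono (image_subset_iff.2 fun _ hy => hy.2)
    ((continuousAt_normalize (ne_zero_of_mem_closure_coneGT hρ hx)).continuousWithinAt
      |>.mem_closure_image hx)

lemma continuousOn_homExt (hρ : 0 < ρ) (hφ : ContinuousOn φ (closure Ω)) (k : ℝ) :
    ContinuousOn (homExt k φ) (closure (coneGT N ρ Ω)) := by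
  refine (continuousOn_norm_rpow (fun x => ne_zero_of_mem_closure_coneGT hρ) k).mul ?_
  refine hφ.comp (fun x hx => ?_) fun x => normalize_mem_closure hρ
  exact (continuousAt_normalize (ne_zero_of_mem_closure_coneGT hρ hx)).continuousWithinAt

namespace DirichletEigenpair

variable (hφ : DirichletEigenpair N Ω lam1 φ)
include hφ

lemma contDiffAt_angularExt (hΩ : IsOpen (cone N Ω)) (hx : x ∈ cone N Ω) :
    ContDiffAt ℝ 2 (angularExt φ) x :=
  hφ.smoothExt.contDiffAt (hΩ.mem_nhds hx)

lemma laplacian_angularExt (hx : x ∈ cone N Ω) :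
    Δ (angularExt φ) x = -lam1 * ‖x‖ ^ (-(2 : ℝ)) * angularExt φ x := by
  rw [← lap_eq_laplacian]
  exact hφ.eigen x hx

lemma angularExt_pos (hx : x ∈ cone N Ω) : 0 < angularExt φ x := hφ.pos _ hx.2

lemma angularExt_le_one (hx : x ∈ cone N Ω) : angularExt φ x ≤ 1 :=
  hφ.le_one _ (subset_closure hx.2)

lemma homExt_pos (hx : x ∈ cone N Ω) (k : ℝ) : 0 < homExt k φ x :=
  mul_pos (Real.rpow_pos_of_pos (norm_pos_iff.2 hx.1) k) (hφ.angularExt_pos hx)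

lemma homExt_le_norm_rpow (hx : x ∈ cone N Ω) (k : ℝ) : homExt k φ x ≤ ‖x‖ ^ k :=
  mul_le_of_le_one_right (Real.rpow_nonneg (norm_nonneg x) k) (hφ.angularExt_le_one hx)

lemma isCompact_angularExt_ge (a b ε : ℝ) :
    IsCompact {x | (Real.exp a ≤ ‖x‖ ∧ ‖x‖ ≤ Real.exp b) ∧
      ‖x‖⁻¹ • x ∈ {ω ∈ closure Ω | ε ≤ φ ω}} := by
  have hshell : IsClosed {x : Euc N | Real.exp a ≤ ‖x‖ ∧ ‖x‖ ≤ Real.exp b} :=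
    (isClosed_le continuous_const continuous_norm).inter
      (isClosed_le continuous_norm continuous_const)
  have hlevel : IsClosed {ω ∈ closure Ω | ε ≤ φ ω} :=
    hφ.contOn.preimage_isClosed_of_isClosed isClosed_closure isClosed_Ici
  have hcont : ContinuousOn (fun x : Euc N => ‖x‖⁻¹ • x)
      {x | Real.exp a ≤ ‖x‖ ∧ ‖x‖ ≤ Real.exp b} := fun x hx =>
    (continuousAt_normalize
      (norm_pos_iff.1 ((Real.exp_pos a).trans_le hx.1))).continuousWithinAt
  refine (isCompact_closedBall (0 : Euc N) (Real.exp b)).of_isClosed_subset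
    (hcont.preimage_isClosed_of_isClosed hshell hlevel) fun x hx => ?_
  exact mem_closedBall_zero_iff.2 hx.1.2

lemma exists_isCompact_subset_coneGT (hρ : 0 < ρ) {a b ε : ℝ} (ha : Real.log ρ < a) (hε : 0 < ε) :
    ∃ K ⊆ coneGT N ρ Ω, IsCompact K ∧
      ∀ x ∈ coneGT N ρ Ω, Real.log ‖x‖ ∈ Icc a b → ε ≤ angularExt φ x → x ∈ K := by
  refine ⟨_, ?_, hφ.isCompact_angularExt_ge a b ε, ?_⟩
  · rintro x ⟨⟨hax, -⟩, hcl, hlevel⟩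
    refine ⟨((Real.log_lt_iff_lt_exp hρ).1 ha).trans_le hax, ?_⟩
    by_contra hx
    exact (hφ.bdryZero _ ⟨hcl, hx⟩ ▸ hlevel).not_gt hε
  · intro x hx hlog hlevel
    have hpos : 0 < ‖x‖ := hρ.trans hx.1
    exact ⟨⟨(Real.le_log_iff_exp_le hpos).1 hlog.1, (Real.log_le_iff_le_exp hpos).1 hlog.2⟩,
      subset_closure hx.2, hlevel⟩

end DirichletEigenpair

end Cone

section ConvexCutoff

/-- A `C²` convex approximation of `s ↦ max s 0` at distance at most `2 * ε`, vanishing on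
`(-∞, ε]`. -/
def convexCutoff (ε s : ℝ) : ℝ := ∫ τ in (0 : ℝ)..s, Real.smoothTransition (τ / ε - 1)

variable {ε s : ℝ}

lemma hasDerivAt_convexCutoff (ε s : ℝ) :
    HasDerivAt (convexCutoff ε) (Real.smoothTransition (s / ε - 1)) s :=
  ((Real.smoothTransition.continuous.comp
    (by fun_prop : Continuous fun τ : ℝ => τ / ε - 1)).integral_hasStrictDerivAt 0 s).hasDerivAt

lemma deriv_convexCutoff (ε : ℝ) :
    deriv (convexCutoff ε) = fun s => Real.smoothTransition (s / ε - 1) :=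
  deriv_eq (hasDerivAt_convexCutoff ε)

lemma contDiff_convexCutoff (ε : ℝ) : ContDiff ℝ 2 (convexCutoff ε) := by
  rw [show (2 : WithTop ℕ∞) = 1 + 1 by norm_num, contDiff_succ_iff_deriv, deriv_convexCutoff]
  exact ⟨fun s => (hasDerivAt_convexCutoff ε s).differentiableAt, by simp,
    (Real.smoothTransition.contDiff (n := 1)).comp (by fun_prop)⟩

lemma deriv_deriv_convexCutoff_nonneg (hε : 0 < ε) (s : ℝ) :
    0 ≤ deriv (deriv (convexCutoff ε)) s := by
  rw [deriv_convexCutoff]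
  exact Monotone.deriv_nonneg fun a b hab => Real.smoothTransition.monotone (by gcongr)

lemma convexCutoff_eq_zero (hε : 0 < ε) (hs : s ≤ ε) : convexCutoff ε s = 0 := by
  refine (intervalIntegral.integral_congr fun τ hτ => ?_).trans intervalIntegral.integral_zero
  refine Real.smoothTransition.zero_of_nonpos (sub_nonpos.2 ((div_le_one hε).2 ?_))
  exact hτ.2.trans (max_le hε.le hs)

lemma convexCutoff_nonneg (ε : ℝ) (hs : 0 ≤ s) : 0 ≤ convexCutoff ε s :=
  intervalIntegral.integral_nonneg hs fun _ _ => Real.smoothTransition.nonneg _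

lemma monotone_sub_convexCutoff (ε : ℝ) : Monotone fun s => s - convexCutoff ε s :=
  monotone_of_hasDerivAt_nonneg (fun s => (hasDerivAt_id s).sub (hasDerivAt_convexCutoff ε s))
    fun _ => sub_nonneg.2 (Real.smoothTransition.le_one _)

lemma convexCutoff_le (ε : ℝ) (hs : 0 ≤ s) : convexCutoff ε s ≤ s := by
  simpa [convexCutoff] using monotone_sub_convexCutoff ε hs

lemma smoothTransition_eq_one (hε : 0 < ε) (hs : 2 * ε ≤ s) :
    Real.smoothTransition (s / ε - 1) = 1 :=
  Real.smoothTransition.one_of_one_le (by linarith [(le_div_iff₀ hε).2 hs])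

lemma sub_convexCutoff_le (hε : 0 < ε) (s : ℝ) : s - convexCutoff ε s ≤ 2 * ε := by
  have hbase : 2 * ε - convexCutoff ε (2 * ε) ≤ 2 * ε :=
    sub_le_self _ (convexCutoff_nonneg ε (by positivity))
  rcases le_total s (2 * ε) with hs | hs
  · exact (monotone_sub_convexCutoff ε hs).trans hbase
  · have hconst : ∫ τ in (2 * ε)..s, Real.smoothTransition (τ / ε - 1) = s - 2 * ε := by
      rw [intervalIntegral.integral_congr (g := fun _ => (1 : ℝ)), integral_one]
      exact fun τ hτ => smoothTransition_eq_one hε (uIcc_of_le hs ▸ hτ).1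
    have hint (a b : ℝ) :
        IntervalIntegrable (fun τ => Real.smoothTransition (τ / ε - 1)) volume a b :=
      (Real.smoothTransition.continuous.comp (by fun_prop)).intervalIntegrable a b
    have hsplit := intervalIntegral.integral_add_adjacent_intervals
      (hint 0 (2 * ε)) (hint (2 * ε) s)
    simp only [convexCutoff] at hbase ⊢
    linarith

lemma abs_convexCutoff_sub_le (hε : 0 < ε) (hs : 0 ≤ s) : |convexCutoff ε s - s| ≤ 2 * ε :=
  abs_le.2 ⟨by linarith [sub_convexCutoff_le hε s], by linarith [convexCutoff_le ε hs]⟩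

lemma abs_convexCutoff_sub_mul_deriv_le (hε : 0 < ε) (hs : 0 ≤ s) :
    |convexCutoff ε s - s * deriv (convexCutoff ε) s| ≤ 2 * ε := by
  simp only [deriv_convexCutoff]
  rcases le_total s (2 * ε) with hsε | hsε
  · have hnonneg := mul_nonneg hs (Real.smoothTransition.nonneg (s / ε - 1))
    have hle := mul_le_of_le_one_right hs (Real.smoothTransition.le_one (s / ε - 1))
    rw [abs_le]
    constructor <;> linarith [convexCutoff_nonneg ε hs, convexCutoff_le ε hs]
  · rw [smoothTransition_eq_one hε hsε, mul_one]
    exact abs_convexCutoff_sub_le hε hs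

end ConvexCutoff

section LocalIntegrability

variable {X : Type*} [TopologicalSpace X] [MeasurableSpace X] [OpensMeasurableSpace X]
  {ν : Measure X} {W g : X → ℝ} {K U : Set X}

lemma locallyIntegrable_restrict_continuousOn_mul [T2Space X] [LocallyCompactSpace X]
    (hW : LocallyIntegrable W (ν.restrict U)) (hg : ContinuousOn g (closure U)) :
    LocallyIntegrable (fun x => g x * W x) (ν.restrict U) := by
  rw [locallyIntegrable_iff] at hW ⊢
  intro K hK
  have hint : IntegrableOn (fun x => g x * W x) (K ∩ closure U) (ν.restrict U) :=
    ((hW K hK).mono_set inter_subset_left).continuousOn_mul (hg.mono inter_subset_right)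
      (hK.inter_right isClosed_closure)
  have hae : ∀ᵐ x ∂ν.restrict U, x ∈ closure U :=
    ae_mono (Measure.restrict_mono_set ν subset_closure)
      (ae_restrict_mem isClosed_closure.measurableSet)
  exact hint.mono_set_ae (hae.mono fun x hx hxK => ⟨hxK, hx⟩)

lemma locallyIntegrable_restrict_of_continuousOn_closure [T2Space X] [LocallyCompactSpace X]
    [IsLocallyFiniteMeasure ν] (hg : ContinuousOn g (closure U)) :
    LocallyIntegrable g (ν.restrict U) := by
  simpa using locallyIntegrable_restrict_continuousOn_mul
    ((locallyIntegrable_const (1 : ℝ)).mono_measure Measure.restrict_le_self) hg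

lemma integrable_mul_of_continuousOn_of_eq_zero [T2Space X] (hW : LocallyIntegrable W ν)
    (hK : IsCompact K) (hg : ContinuousOn g K) (hgK : ∀ᵐ x ∂ν, x ∉ K → g x = 0) :
    Integrable (fun x => g x * W x) ν :=
  ((hW.integrableOn_isCompact hK).continuousOn_mul hg hK).integrable_of_ae_notMem_eq_zero
    (hgK.mono fun x hx hxK => by rw [hx hxK, zero_mul])

variable {E : Type*} [NormedAddCommGroup E] [ProperSpace E] [MeasurableSpace E] [BorelSpace E]
  {ν : Measure E} {W : E → ℝ} {χ : ℝ → ℝ}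

lemma integrable_radial_mul (hW : LocallyIntegrable W ν)
    (hν : ∀ᵐ x ∂ν, x ≠ 0) (hχ : Continuous χ) (hχc : HasCompactSupport χ) :
    Integrable (fun x => χ (Real.log ‖x‖) * W x) ν := by
  obtain ⟨R, hR⟩ := hχc.isBounded.subset_closedBall 0
  have hK : IsCompact {x : E | Real.exp (-R) ≤ ‖x‖ ∧ ‖x‖ ≤ Real.exp R} :=
    (isCompact_closedBall (0 : E) (Real.exp R)).of_isClosed_subset
      ((isClosed_le continuous_const continuous_norm).inter
        (isClosed_le continuous_norm continuous_const))
      fun x hx => mem_closedBall_zero_iff.2 hx.2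
  refine integrable_mul_of_continuousOn_of_eq_zero hW hK ?_ (hν.mono fun x hx hxK => ?_)
  · exact hχ.comp_continuousOn (continuous_norm.continuousOn.log fun x hx =>
      ((Real.exp_pos (-R)).trans_le hx.1).ne')
  · refine image_eq_zero_of_notMem_tsupport fun hmem => hxK ?_
    have hlog := abs_le.1 (mem_closedBall_zero_iff.1 (hR hmem))
    exact ⟨(Real.le_log_iff_exp_le (norm_pos_iff.2 hx)).1 hlog.1,
      (Real.log_le_iff_le_exp (norm_pos_iff.2 hx)).1 hlog.2⟩

lemma integrable_norm_rpow_mul_radial_mul (hW : LocallyIntegrable W ν) (hν : ∀ᵐ x ∂ν, x ≠ 0)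
    (hχ : Continuous χ) (hχc : HasCompactSupport χ) (k : ℝ) :
    Integrable (fun x => ‖x‖ ^ k * χ (Real.log ‖x‖) * W x) ν := by
  refine (integrable_radial_mul hW hν (χ := fun t => Real.exp (k * t) * χ t) (by fun_prop)
    hχc.mul_left).congr (hν.mono fun x hx => ?_)
  simp only [norm_rpow_eq_exp_mul_log hx]

end LocalIntegrability

section HardyOperator

variable {E : Type*} [NormedAddCommGroup E] [InnerProductSpace ℝ E] [FiniteDimensional ℝ E]

/-- The Hardy operator `-Δ - μ / |x| ^ 2`. -/
def hardyOp (μ : ℝ) (v : E → ℝ) (x : E) : ℝ := -Δ v x - μ * ‖x‖ ^ (-(2 : ℝ)) * v x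

variable {U : Set E} {T v : E → ℝ} {x : E}

lemma hardyOp_congr (μ : ℝ) {w : E → ℝ} (h : v =ᶠ[𝓝 x] w) : hardyOp μ v x = hardyOp μ w x := by
  rw [hardyOp, hardyOp, (laplacian_congr_nhds h).eq_of_nhds, h.eq_of_nhds]

lemma hardyOp_sub (μ : ℝ) {f g : E → ℝ} (hf : ContDiffAt ℝ 2 f x) (hg : ContDiffAt ℝ 2 g x) :
    hardyOp μ (f - g) x = hardyOp μ f x - hardyOp μ g x := by
  simp only [hardyOp, hf.laplacian_sub hg, Pi.sub_apply]
  ring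

lemma hardyOp_smul (μ c : ℝ) (hv : ContDiffAt ℝ 2 v x) :
    hardyOp μ (c • v) x = c * hardyOp μ v x := by
  simp only [hardyOp, laplacian_smul c hv, Pi.smul_apply, smul_eq_mul]
  ring

lemma hardyOp_halfHarmonic_nonneg {μ : ℝ} {f g : E → ℝ} (hf : ContDiffAt ℝ 2 f x)
    (hg : ContDiffAt ℝ 2 g x) (hf₀ : 0 < f x) (hg₀ : 0 < g x) (hfμ : 0 ≤ hardyOp μ f x)
    (hgμ : 0 ≤ hardyOp μ g x) : 0 ≤ hardyOp μ (halfHarmonic f g) x := by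
  have hfg : 0 < f x + g x := add_pos hf₀ hg₀
  have hvalue : halfHarmonic f g x = (g x / (f x + g x)) ^ 2 * f x +
      (f x / (f x + g x)) ^ 2 * g x := by
    rw [halfHarmonic]
    field_simp
    ring
  calc 0 ≤ (g x / (f x + g x)) ^ 2 * hardyOp μ f x + (f x / (f x + g x)) ^ 2 * hardyOp μ g x := by
        positivity
    _ = -((g x / (f x + g x)) ^ 2 * Δ f x + (f x / (f x + g x)) ^ 2 * Δ g x) -
          μ * ‖x‖ ^ (-(2 : ℝ)) * halfHarmonic f g x := by
        rw [hvalue, hardyOp, hardyOp]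
        ring
    _ ≤ hardyOp μ (halfHarmonic f g) x :=
        sub_le_sub_right (neg_le_neg (laplacian_halfHarmonic_le hf hg hfg)) _

lemma continuousOn_hardyOp (hU : IsOpen U) (hU₀ : ∀ x ∈ U, x ≠ 0) (hv : ContDiffOn ℝ 2 v U)
    (μ : ℝ) : ContinuousOn (hardyOp μ v) U := by
  refine ContinuousOn.sub (ContinuousOn.neg ?_)
    ((continuousOn_const.mul (continuousOn_norm_rpow hU₀ _)).mul hv.continuousOn)
  refine (continuousOn_finsetSum Finset.univ fun i _ => continuousOn_fderiv_fderiv_apply hU hv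
    (stdOrthonormalBasis ℝ E i)).congr fun x hx => ?_
  exact laplacian_eq_sum_fderiv_fderiv _ (hv.contDiffAt (hU.mem_nhds hx))

lemma tsupport_hardyOp_subset (μ : ℝ) : tsupport (hardyOp μ T) ⊆ tsupport T := by
  refine closure_minimal (fun x hx => ?_) (isClosed_tsupport T)
  by_contra hxT
  refine hx ((hardyOp_congr μ (notMem_tsupport_iff_eventuallyEq.1 hxT)).trans ?_)
  simp [hardyOp, Pi.zero_def]

variable [MeasurableSpace E] [BorelSpace E] {ν : Measure E}

lemma integrable_mul_hardyOp [IsFiniteMeasureOnCompacts ν] (hU : IsOpen U) (hU₀ : ∀ x ∈ U, x ≠ 0)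
    (hT : Continuous T) (hTc : HasCompactSupport T) (hTU : tsupport T ⊆ U)
    (hv : ContDiffOn ℝ 2 v U) (μ : ℝ) : Integrable (fun x => T x * hardyOp μ v x) ν :=
  integrable_mul_of_tsupport_subset hT hTc hTU hU (continuousOn_hardyOp hU hU₀ hv μ)

lemma integrable_hardyOp_mul [IsFiniteMeasureOnCompacts ν] (hU : IsOpen U) (hU₀ : ∀ x ∈ U, x ≠ 0)
    (hT : ContDiff ℝ 2 T) (hTc : HasCompactSupport T) (hTU : tsupport T ⊆ U)
    (hv : ContinuousOn v U) (μ : ℝ) : Integrable (fun x => hardyOp μ T x * v x) ν := by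
  have hsupp : tsupport (hardyOp μ T) ⊆ tsupport T := tsupport_hardyOp_subset μ
  refine integrable_mul_of_tsupport_subset ?_ (hTc.of_isClosed_subset (isClosed_tsupport _) hsupp)
    (hsupp.trans hTU) hU hv
  exact continuous_of_tsupport fun x hx =>
    (continuousOn_hardyOp hU hU₀ hT.contDiffOn μ).continuousAt (hU.mem_nhds (hTU (hsupp hx)))

lemma integral_mul_hardyOp_comm [ν.IsAddHaarMeasure] (hU : IsOpen U) (hU₀ : ∀ x ∈ U, x ≠ 0)
    (hT : ContDiff ℝ 2 T) (hTc : HasCompactSupport T) (hTU : tsupport T ⊆ U)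
    (hv : ContDiffOn ℝ 2 v U) (μ : ℝ) :
    ∫ x, T x * hardyOp μ v x ∂ν = ∫ x, hardyOp μ T x * v x ∂ν := by
  have hpot : Integrable (fun x => T x * (μ * ‖x‖ ^ (-(2 : ℝ)) * v x)) ν :=
    integrable_mul_of_tsupport_subset hT.continuous hTc hTU hU
      ((continuousOn_const.mul (continuousOn_norm_rpow hU₀ _)).mul hv.continuousOn)
  have hleft := integrable_mul_hardyOp (ν := ν) hU hU₀ hT.continuous hTc hTU hv μ
  have hright := integrable_hardyOp_mul (ν := ν) hU hU₀ hT hTc hTU hv.continuousOn μ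
  refine add_right_cancel (b := ∫ x, T x * (μ * ‖x‖ ^ (-(2 : ℝ)) * v x) ∂ν) ?_
  rw [← integral_add hleft hpot, ← integral_add hright hpot]
  calc _ = ∫ x, -(T x * Δ v x) ∂ν := by simp only [hardyOp]; ring_nf
    _ = ∫ x, -(Δ T x * v x) ∂ν := by
      rw [integral_neg, integral_neg, integral_mul_laplacian_comm hU hT hTc hTU hv]
    _ = _ := by simp only [hardyOp]; ring_nf

variable {f : E → ℝ} {μ : ℝ}

lemma integrableOn_mul_sub_hardyOp_mul [IsFiniteMeasureOnCompacts ν] (hU : IsOpen U)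
    (hU₀ : ∀ x ∈ U, x ≠ 0) (hT : ContDiff ℝ 2 T) (hTc : HasCompactSupport T)
    (hTU : tsupport T ⊆ U) (hv : ContinuousOn v U) (hf : LocallyIntegrable f (ν.restrict U))
    (μ : ℝ) : IntegrableOn (fun x => T x * f x - hardyOp μ T x * v x) U ν :=
  (hf.integrable_smul_left_of_hasCompactSupport hT.continuous hTc).sub
    (integrable_hardyOp_mul hU hU₀ hT hTc hTU hv μ).integrableOn

lemma setIntegral_mul_sub_hardyOp_mul_nonpos [ν.IsAddHaarMeasure] (hU : IsOpen U)
    (hU₀ : ∀ x ∈ U, x ≠ 0) (hT : ContDiff ℝ 2 T) (hTc : HasCompactSupport T)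
    (hTU : tsupport T ⊆ U) (hT₀ : ∀ x, 0 ≤ T x) (hv : ContDiffOn ℝ 2 v U)
    (hf : LocallyIntegrable f (ν.restrict U)) (hfv : ∀ x ∈ U, f x ≤ hardyOp μ v x) :
    ∫ x in U, (T x * f x - hardyOp μ T x * v x) ∂ν ≤ 0 := by
  have hTf : IntegrableOn (fun x => T x * f x) U ν :=
    hf.integrable_smul_left_of_hasCompactSupport hT.continuous hTc
  have hTv := integrable_mul_hardyOp (ν := ν) hU hU₀ hT.continuous hTc hTU hv μ
  have hvT := integrable_hardyOp_mul (ν := ν) hU hU₀ hT hTc hTU hv.continuousOn μ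
  have hT_off (x) (hx : x ∉ U) : T x = 0 := image_eq_zero_of_notMem_tsupport fun h => hx (hTU h)
  have hHT_off (x) (hx : x ∉ U) : hardyOp μ T x = 0 :=
    image_eq_zero_of_notMem_tsupport fun h => hx (hTU (tsupport_hardyOp_subset μ h))
  have hswap : ∫ x in U, hardyOp μ T x * v x ∂ν = ∫ x in U, T x * hardyOp μ v x ∂ν := by
    rw [setIntegral_eq_integral_of_forall_compl_eq_zero fun x hx => by rw [hHT_off x hx, zero_mul],
      setIntegral_eq_integral_of_forall_compl_eq_zero fun x hx => by rw [hT_off x hx, zero_mul],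
      integral_mul_hardyOp_comm hU hU₀ hT hTc hTU hv]
  rw [integral_sub hTf hvT.integrableOn, hswap, sub_nonpos]
  exact setIntegral_mono_on hTf hTv.integrableOn hU.measurableSet fun x hx =>
    mul_le_mul_of_nonneg_left (hfv x hx) (hT₀ x)

end HardyOperator

section WeakInequality

variable {N : ℕ} {Ω : Set (Euc N)} {ρ lam1 μ k ε : ℝ} {φ f v : Euc N → ℝ} {χ : ℝ → ℝ} {x : Euc N}

/-- The test function `|x| ^ k η(Φ(x)) χ(log |x|)` on the cone, where `η` is the convex cutoff at
height `ε`; when `χ` has compact support, it vanishes near the boundary of the cone. -/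
def coneTest (Ω : Set (Euc N)) (ρ k ε : ℝ) (φ : Euc N → ℝ) (χ : ℝ → ℝ) : Euc N → ℝ :=
  (coneGT N ρ Ω).indicator fun x => homExt k (convexCutoff ε ∘ φ) x * χ (Real.log ‖x‖)

lemma exists_subset_Icc_of_isCompact_of_subset_Ioi {K : Set ℝ} {r : ℝ} (hK : IsCompact K)
    (hKr : K ⊆ Ioi r) : ∃ a b, r < a ∧ K ⊆ Icc a b := by
  rcases K.eq_empty_or_nonempty with rfl | hne
  · exact ⟨r + 1, r, lt_add_one r, empty_subset _⟩
  · obtain ⟨a, haK, ha⟩ := hK.exists_isLeast hne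
    obtain ⟨b, -, hb⟩ := hK.exists_isGreatest hne
    exact ⟨a, b, hKr haK, fun t ht => ⟨ha ht, hb ht⟩⟩

lemma mul_mul_le_mul_abs_mul {a b δ r : ℝ} (ha : 0 ≤ a) (hδ : |δ| ≤ r) :
    a * (b * δ) ≤ a * (|b| * r) :=
  mul_le_mul_of_nonneg_left ((le_abs_self _).trans
    ((abs_mul b δ).trans_le (mul_le_mul_of_nonneg_left hδ (abs_nonneg b)))) ha

namespace DirichletEigenpair

variable (hφ : DirichletEigenpair N Ω lam1 φ) (hΩ : IsOpen (cone N Ω)) (hρ : 0 < ρ)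
include hφ hΩ hρ

lemma contDiffOn_coneTest (k ε : ℝ) (hχ : ContDiff ℝ 2 χ) :
    ContDiffOn ℝ 2 (coneTest Ω ρ k ε φ χ) (coneGT N ρ Ω) := by
  refine ContDiffOn.congr (fun x hx => ContDiffAt.contDiffWithinAt ?_)
    fun x hx => indicator_of_mem hx _
  refine contDiffAt_homExt_mul_radial (ne_zero_of_mem_coneGT hρ hx) k hχ ?_
  exact (contDiff_convexCutoff ε).contDiffAt.comp x
    (hφ.contDiffAt_angularExt hΩ (coneGT_subset_cone hρ hx))

lemma neg_hardyOp_coneTest_ge (hk : k * (k + N - 2) = lam1 - μ) (hε : 0 < ε)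
    (hχ : ContDiff ℝ 2 χ) (hχ₀ : ∀ t, 0 ≤ χ t) (hx : x ∈ coneGT N ρ Ω) :
    ‖x‖ ^ (k - 2) *
      ((deriv (deriv χ) (Real.log ‖x‖) + (2 * k + N - 2) * deriv χ (Real.log ‖x‖)) *
          convexCutoff ε (angularExt φ x) +
        lam1 * χ (Real.log ‖x‖) * (convexCutoff ε (angularExt φ x) -
          angularExt φ x * deriv (convexCutoff ε) (angularExt φ x))) ≤
      -hardyOp μ (coneTest Ω ρ k ε φ χ) x := by
  have hx₀ := ne_zero_of_mem_coneGT hρ hx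
  have hxC := coneGT_subset_cone hρ hx
  have hΦ := hφ.contDiffAt_angularExt hΩ hxC
  have hη := contDiff_convexCutoff ε
  have hang : angularExt (convexCutoff ε ∘ φ) = fun y => convexCutoff ε (angularExt φ y) := rfl
  have hev : coneTest Ω ρ k ε φ χ =ᶠ[𝓝 x]
      fun y => homExt k (convexCutoff ε ∘ φ) y * χ (Real.log ‖y‖) :=
    (eqOn_indicator (s := coneGT N ρ Ω)).eventuallyEq_of_mem ((isOpen_coneGT hρ hΩ).mem_nhds hx)
  have hlap := laplacian_homExt_mul_radial hx₀ k hχ (ψ := convexCutoff ε ∘ φ)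
    (hη.contDiffAt.comp x hΦ)
  rw [hang, laplacian_comp_real hη.contDiffAt hΦ, hφ.laplacian_angularExt hxC,
    finrank_euclideanSpace_fin] at hlap
  have hgrad : 0 ≤ ‖x‖ ^ k * χ (Real.log ‖x‖) *
      (deriv (deriv (convexCutoff ε)) (angularExt φ x) * ‖∇ (angularExt φ) x‖ ^ 2) := by
    have := deriv_deriv_convexCutoff_nonneg hε (angularExt φ x)
    have := hχ₀ (Real.log ‖x‖)
    positivity
  have hpow : ‖x‖ ^ (k - 2) = ‖x‖ ^ k * ‖x‖ ^ (-(2 : ℝ)) := by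
    rw [← Real.rpow_add (norm_pos_iff.2 hx₀), ← sub_eq_add_neg]
  rw [hardyOp_congr μ hev, hardyOp, hlap, homExt, homExt, hang, hk]
  simp only [hpow] at hgrad ⊢
  linarith

omit hΩ in
lemma hasCompactSupport_coneTest_and_tsupport_subset (k : ℝ) (hε : 0 < ε)
    (hχc : HasCompactSupport χ) (hχρ : tsupport χ ⊆ Ioi (Real.log ρ)) :
    HasCompactSupport (coneTest Ω ρ k ε φ χ) ∧
      tsupport (coneTest Ω ρ k ε φ χ) ⊆ coneGT N ρ Ω := by
  obtain ⟨a, b, ha, hab⟩ := exists_subset_Icc_of_isCompact_of_subset_Ioi hχc.isCompact hχρ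
  obtain ⟨K, hKU, hK, hmem⟩ := hφ.exists_isCompact_subset_coneGT (b := b) hρ ha hε
  have hsupp : Function.support (coneTest Ω ρ k ε φ χ) ⊆ K := by
    intro x hx
    have hxU : x ∈ coneGT N ρ Ω := mem_of_indicator_ne_zero hx
    rw [Function.mem_support, coneTest, indicator_of_mem hxU] at hx
    refine hmem x hxU (hab (subset_tsupport χ (right_ne_zero_of_mul hx))) ?_
    by_contra! hlt
    exact right_ne_zero_of_mul (left_ne_zero_of_mul hx) (convexCutoff_eq_zero hε hlt.le)
  exact ⟨HasCompactSupport.intro hK fun x hx => by_contra fun h => hx (hsupp h),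
    (closure_minimal hsupp hK.isClosed).trans hKU⟩

lemma mul_sub_hardyOp_coneTest_mul_ge (hk : k * (k + N - 2) = lam1 - μ) (hε : 0 < ε)
    (hχ : ContDiff ℝ 2 χ) (hχ₀ : ∀ t, 0 ≤ χ t) (hx : x ∈ coneGT N ρ Ω) (hvx : 0 ≤ v x) :
    χ (Real.log ‖x‖) * (homExt k φ x * f x) +
        (deriv (deriv χ) (Real.log ‖x‖) + (2 * k + N - 2) * deriv χ (Real.log ‖x‖)) *
          (homExt (k - 2) φ x * v x) -
      2 * ε * (‖x‖ ^ k * χ (Real.log ‖x‖) * |f x| + ‖x‖ ^ (k - 2) *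
        (|deriv (deriv χ) (Real.log ‖x‖) + (2 * k + N - 2) * deriv χ (Real.log ‖x‖)| +
          |lam1| * χ (Real.log ‖x‖)) * v x) ≤
    coneTest Ω ρ k ε φ χ x * f x - hardyOp μ (coneTest Ω ρ k ε φ χ) x * v x := by
  have hΦ := (hφ.angularExt_pos (coneGT_subset_cone hρ hx)).le
  have hop := mul_le_mul_of_nonneg_right
    (hφ.neg_hardyOp_coneTest_ge hΩ hρ hk hε hχ hχ₀ hx) hvx
  have htest : coneTest Ω ρ k ε φ χ x =
      ‖x‖ ^ k * convexCutoff ε (angularExt φ x) * χ (Real.log ‖x‖) := indicator_of_mem hx _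
  rw [htest, homExt, homExt]
  have hη := (abs_sub_comm _ _).trans_le (abs_convexCutoff_sub_le hε hΦ)
  have hη' := abs_convexCutoff_sub_mul_deriv_le hε hΦ
  have hχx := hχ₀ (Real.log ‖x‖)
  generalize deriv (deriv χ) (Real.log ‖x‖) + (2 * k + N - 2) * deriv χ (Real.log ‖x‖) = L at *
  generalize convexCutoff ε (angularExt φ x) - angularExt φ x * deriv (convexCutoff ε)
    (angularExt φ x) = δ at *
  generalize convexCutoff ε (angularExt φ x) = η at *
  generalize χ (Real.log ‖x‖) = c at *
  have hpow (a : ℝ) : 0 ≤ ‖x‖ ^ a := Real.rpow_nonneg (norm_nonneg x) a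
  have hsource : ‖x‖ ^ k * c * (f x * (angularExt φ x - η)) ≤ ‖x‖ ^ k * c * (|f x| * (2 * ε)) :=
    mul_mul_le_mul_abs_mul (mul_nonneg (hpow k) hχx) hη
  have hradial : ‖x‖ ^ (k - 2) * v x * (L * (angularExt φ x - η)) ≤
      ‖x‖ ^ (k - 2) * v x * (|L| * (2 * ε)) :=
    mul_mul_le_mul_abs_mul (mul_nonneg (hpow _) hvx) hη
  have hangular : ‖x‖ ^ (k - 2) * v x * c * (-lam1 * δ) ≤
      ‖x‖ ^ (k - 2) * v x * c * (|lam1| * (2 * ε)) := by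
    simpa only [abs_neg] using
      mul_mul_le_mul_abs_mul (b := -lam1) (mul_nonneg (mul_nonneg (hpow _) hvx) hχx) hη'
  linarith

lemma contDiff_coneTest (k : ℝ) (hε : 0 < ε) (hχ : ContDiff ℝ 2 χ) (hχc : HasCompactSupport χ)
    (hχρ : tsupport χ ⊆ Ioi (Real.log ρ)) : ContDiff ℝ 2 (coneTest Ω ρ k ε φ χ) :=
  contDiff_of_contDiffOn_of_tsupport_subset (isOpen_coneGT hρ hΩ)
    (hφ.contDiffOn_coneTest hΩ hρ k ε hχ)
    (hφ.hasCompactSupport_coneTest_and_tsupport_subset hρ k hε hχc hχρ).2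

omit hΩ in
lemma coneTest_nonneg (k ε : ℝ) (hχ₀ : ∀ t, 0 ≤ χ t) (x : Euc N) :
    0 ≤ coneTest Ω ρ k ε φ χ x :=
  indicator_nonneg (fun y hy => mul_nonneg (mul_nonneg (Real.rpow_nonneg (norm_nonneg y) k)
    (convexCutoff_nonneg ε (hφ.angularExt_pos (coneGT_subset_cone hρ hy)).le)) (hχ₀ _)) x

lemma setIntegral_nonpos_of_le_coneTest {P R : Euc N → ℝ}
    (hP : IntegrableOn P (coneGT N ρ Ω)) (hR : IntegrableOn R (coneGT N ρ Ω))
    (hχ : ContDiff ℝ 2 χ) (hχ₀ : ∀ t, 0 ≤ χ t) (hχc : HasCompactSupport χ)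
    (hχρ : tsupport χ ⊆ Ioi (Real.log ρ)) (hv : ContDiffOn ℝ 2 v (coneGT N ρ Ω))
    (hf : LocallyIntegrable f (volume.restrict (coneGT N ρ Ω)))
    (hfv : ∀ x ∈ coneGT N ρ Ω, f x ≤ hardyOp μ v x)
    (hPR : ∀ ε > 0, ∀ x ∈ coneGT N ρ Ω, P x - 2 * ε * R x ≤
      coneTest Ω ρ k ε φ χ x * f x - hardyOp μ (coneTest Ω ρ k ε φ χ) x * v x) :
    ∫ x in coneGT N ρ Ω, P x ≤ 0 := by
  have hU := isOpen_coneGT hρ hΩ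
  have hU₀ (x) (hx : x ∈ coneGT N ρ Ω) : x ≠ 0 := ne_zero_of_mem_coneGT hρ hx
  have hlimit : Tendsto (fun ε : ℝ => 2 * ε * ∫ x in coneGT N ρ Ω, R x) (𝓝[>] 0) (𝓝 0) :=
    tendsto_nhdsWithin_of_tendsto_nhds (Continuous.tendsto' (by fun_prop) _ _ (by simp))
  refine ge_of_tendsto hlimit (eventually_nhdsWithin_of_forall fun ε hε => ?_)
  obtain ⟨hTc, hTU⟩ := hφ.hasCompactSupport_coneTest_and_tsupport_subset hρ k hε hχc hχρ
  have hT := hφ.contDiff_coneTest hΩ hρ k hε hχ hχc hχρ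
  rw [← sub_nonpos, ← integral_const_mul, ← integral_sub hP (hR.const_mul _)]
  calc ∫ x in coneGT N ρ Ω, (P x - 2 * ε * R x)
      ≤ ∫ x in coneGT N ρ Ω,
          (coneTest Ω ρ k ε φ χ x * f x - hardyOp μ (coneTest Ω ρ k ε φ χ) x * v x) :=
        setIntegral_mono_on (hP.sub (hR.const_mul _))
          (integrableOn_mul_sub_hardyOp_mul hU hU₀ hT hTc hTU hv.continuousOn hf μ)
          hU.measurableSet (hPR ε hε)
    _ ≤ 0 := setIntegral_mul_sub_hardyOp_mul_nonpos hU hU₀ hT hTc hTU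
        (hφ.coneTest_nonneg hρ k ε hχ₀) hv hf hfv

lemma setIntegral_radial_mul_le (hk : k * (k + N - 2) = lam1 - μ)
    (hχ : ContDiff ℝ 2 χ) (hχ₀ : ∀ t, 0 ≤ χ t) (hχc : HasCompactSupport χ)
    (hχρ : tsupport χ ⊆ Ioi (Real.log ρ)) (hv : ContDiffOn ℝ 2 v (coneGT N ρ Ω))
    (hv₀ : ∀ x ∈ coneGT N ρ Ω, 0 ≤ v x)
    (hvloc : LocallyIntegrable v (volume.restrict (coneGT N ρ Ω)))
    (hf : LocallyIntegrable f (volume.restrict (coneGT N ρ Ω)))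
    (hfv : ∀ x ∈ coneGT N ρ Ω, f x ≤ hardyOp μ v x) :
    ∫ x in coneGT N ρ Ω, χ (Real.log ‖x‖) * (homExt k φ x * f x) ≤
      -∫ x in coneGT N ρ Ω,
        (deriv (deriv χ) (Real.log ‖x‖) + (2 * k + N - 2) * deriv χ (Real.log ‖x‖)) *
          (homExt (k - 2) φ x * v x) := by
  set U := coneGT N ρ Ω
  set L : ℝ → ℝ := fun t => deriv (deriv χ) t + (2 * k + N - 2) * deriv χ t
  have hae : ∀ᵐ x ∂volume.restrict U, x ≠ 0 :=
    (ae_restrict_mem (isOpen_coneGT hρ hΩ).measurableSet).mono fun x => ne_zero_of_mem_coneGT hρ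
  have hχ' : ContDiff ℝ 1 (deriv χ) := hχ.deriv'
  have hL : Continuous L :=
    (hχ'.continuous_deriv le_rfl).add (continuous_const.mul hχ'.continuous)
  have hLc : HasCompactSupport L := hχc.deriv.deriv.add (hχc.deriv.mul_left)
  have hA : IntegrableOn (fun x => χ (Real.log ‖x‖) * (homExt k φ x * f x)) U :=
    integrable_radial_mul (locallyIntegrable_restrict_continuousOn_mul hf
      (continuousOn_homExt hρ hφ.contOn k)) hae hχ.continuous hχc
  have hB : IntegrableOn (fun x => L (Real.log ‖x‖) * (homExt (k - 2) φ x * v x)) U :=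
    integrable_radial_mul (locallyIntegrable_restrict_continuousOn_mul hvloc
      (continuousOn_homExt hρ hφ.contOn (k - 2))) hae hL hLc
  have hR : IntegrableOn (fun x => ‖x‖ ^ k * χ (Real.log ‖x‖) * |f x| + ‖x‖ ^ (k - 2) *
      (|L (Real.log ‖x‖)| + |lam1| * χ (Real.log ‖x‖)) * v x) U :=
    (integrable_norm_rpow_mul_radial_mul (fun x => (hf x).norm) hae hχ.continuous hχc k).add
      (integrable_norm_rpow_mul_radial_mul hvloc hae (χ := fun t => |L t| + |lam1| * χ t)
        (by fun_prop) ((hLc.comp_left abs_zero).add hχc.mul_left) (k - 2))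
  rw [← sub_nonpos, sub_neg_eq_add, ← integral_add hA hB]
  exact hφ.setIntegral_nonpos_of_le_coneTest hΩ hρ (hA.add hB) hR hχ hχ₀ hχc hχρ hv hf hfv
    fun ε hε x hx => hφ.mul_sub_hardyOp_coneTest_mul_ge hΩ hρ hk hε hχ hχ₀ hx (hv₀ x hx)

end DirichletEigenpair

end WeakInequality

section LogMean

section General

variable {E : Type*} [NormedAddCommGroup E] [MeasurableSpace E] {ν : Measure E} {W : E → ℝ}
  {m : ℝ → ℝ} {t : ℝ}

/-- The mean `∫ m (t - log |x|) W x dν` of `W` around the sphere `|x| = exp t`, in the logarithmic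
radial variable and with kernel `m`. -/
def logMean (ν : Measure E) (W : E → ℝ) (m : ℝ → ℝ) (t : ℝ) : ℝ :=
  ∫ x, m (t - Real.log ‖x‖) * W x ∂ν

variable [ProperSpace E] [BorelSpace E]

lemma integrable_logMean (hW : LocallyIntegrable W ν) (hν : ∀ᵐ x ∂ν, x ≠ 0) (hm : Continuous m)
    (hmc : HasCompactSupport m) (t : ℝ) : Integrable (fun x => m (t - Real.log ‖x‖) * W x) ν :=
  integrable_radial_mul hW hν (χ := fun s => m (t - s)) (by fun_prop)
    (hmc.comp_homeomorph (Homeomorph.subLeft t))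

lemma logMean_pos (hW : LocallyIntegrable W ν) (hν : ∀ᵐ x ∂ν, x ≠ 0)
    (hm : Continuous m) (hmc : HasCompactSupport m) (hm₀ : ∀ s, 0 ≤ m s)
    (hW₀ : ∀ᵐ x ∂ν, 0 < W x) (ht : ν {x | m (t - Real.log ‖x‖) ≠ 0} ≠ 0) :
    0 < logMean ν W m t := by
  refine (integral_pos_iff_support_of_nonneg_ae (hW₀.mono fun x hx => mul_nonneg (hm₀ _) hx.le)
    (integrable_logMean hW hν hm hmc t)).2 (pos_iff_ne_zero.2 fun h => ht ?_)
  rw [measure_eq_zero_iff_ae_notMem] at h ⊢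
  filter_upwards [h, hW₀] with x hx hWx hmx using hx (mul_ne_zero hmx hWx.ne')

lemma hasDerivAt_logMean (hW : LocallyIntegrable W ν) (hν : ∀ᵐ x ∂ν, x ≠ 0) (hm : ContDiff ℝ 1 m)
    (hmc : HasCompactSupport m) (t : ℝ) :
    HasDerivAt (logMean ν W m) (logMean ν W (deriv m) t) t := by
  have hm' : Continuous (deriv m) := hm.continuous_deriv le_rfl
  obtain ⟨C, hC⟩ := hm'.bounded_above_of_compact_support hmc.deriv
  obtain ⟨R, hR₀, hR⟩ := hmc.deriv.isBounded.subset_closedBall_lt 0 0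
  let ψ : ContDiffBump t := ⟨R + 1, R + 2, by positivity, by linarith⟩
  have hbound (x : E) (s : ℝ) (hs : s ∈ Metric.ball t 1) :
      ‖deriv m (s - Real.log ‖x‖) * W x‖ ≤ C * (ψ (Real.log ‖x‖) * ‖W x‖) := by
    by_cases hx : s - Real.log ‖x‖ ∈ tsupport (deriv m)
    · have hψ : ψ (Real.log ‖x‖) = 1 := by
        have := mem_closedBall_zero_iff.1 (hR hx)
        refine ψ.one_of_mem_closedBall ?_
        rw [Metric.mem_ball, Real.dist_eq] at hs
        rw [Metric.mem_closedBall, Real.dist_eq]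
        rw [Real.norm_eq_abs, abs_le] at this
        rw [abs_lt] at hs
        exact abs_le.2 ⟨by linarith, by linarith⟩
      rw [hψ, one_mul, norm_mul]
      exact mul_le_mul_of_nonneg_right (hC _) (norm_nonneg _)
    · rw [image_eq_zero_of_notMem_tsupport hx, zero_mul, norm_zero]
      have := (norm_nonneg _).trans (hC 0)
      have := ψ.nonneg (x := Real.log ‖x‖)
      positivity
  have hint := integrable_logMean hW hν hm.continuous hmc
  refine (hasDerivAt_integral_of_dominated_loc_of_deriv_le (Metric.ball_mem_nhds t one_pos)
    (Eventually.of_forall fun s => (hint s).aestronglyMeasurable) (hint t)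
    (integrable_logMean hW hν hm' hmc.deriv t).aestronglyMeasurable
    (ae_of_all ν hbound) ?_ (ae_of_all ν fun x s _ => ?_)).2
  · exact (integrable_radial_mul (fun x => (hW x).norm) hν ψ.continuous
      ψ.hasCompactSupport).const_mul C
  · exact ((hm.differentiable one_ne_zero _).hasDerivAt.comp_sub_const s _).mul_const (W x)

end General

end LogMean

section DifferentialInequalities

variable {H H' H'' : ℝ → ℝ} {B D T c q δ : ℝ}

lemma exists_neg_of_deriv_le_neg (hδ : 0 < δ) (hH : ∀ t, T ≤ t → HasDerivAt H (H' t) t)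
    (hH' : ∀ t, T ≤ t → H' t ≤ -δ) : ∃ t, T ≤ t ∧ H t < 0 := by
  have hbound (t) (ht : T ≤ t) : H t ≤ H T - δ * (t - T) := by
    have := (convex_Ici T).image_sub_le_mul_sub_of_deriv_le
      (fun s hs => (hH s hs).continuousAt.continuousWithinAt)
      (fun s hs => (hH s (interior_subset hs)).differentiableAt.differentiableWithinAt)
      (fun s hs => (hH s (interior_subset hs)).deriv.trans_le (hH' s (interior_subset hs)))
      T self_mem_Ici t ht ht
    linarith
  have hT : T ≤ T + (|H T| + 1) / δ := by simpa using by positivity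
  refine ⟨_, hT, (hbound _ hT).trans_lt ?_⟩
  rw [add_sub_cancel_left, mul_div_cancel₀ _ hδ.ne']
  linarith [le_abs_self (H T)]

lemma deriv_sub_le_mul_exp (hH' : ∀ t, T ≤ t → HasDerivAt H' (H'' t) t)
    (hH'' : ∀ t, T ≤ t → H'' t ≤ D * (H' t - B)) {t : ℝ} (ht : T ≤ t) :
    H' t - B ≤ (H' T - B) * Real.exp (D * (t - T)) := by
  have hd (s) (hs : T ≤ s) : HasDerivAt (fun s => (H' s - B) * Real.exp (-(D * (s - T))))
      ((H'' s - D * (H' s - B)) * Real.exp (-(D * (s - T)))) s := by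
    have h := ((hH' s hs).sub_const B).mul
      ((((hasDerivAt_id s).sub_const T).const_mul D).fun_neg.exp)
    exact h.congr_deriv (by simp only [id_eq]; ring)
  have hanti : AntitoneOn (fun s => (H' s - B) * Real.exp (-(D * (s - T)))) (Ici T) :=
    antitoneOn_of_deriv_nonpos (convex_Ici T)
      (fun s hs => (hd s hs).continuousAt.continuousWithinAt)
      (fun s hs => (hd s (interior_subset hs)).differentiableAt.differentiableWithinAt)
      fun s hs => (hd s (interior_subset hs)).deriv.trans_le
        (mul_nonpos_of_nonpos_of_nonneg (sub_nonpos.2 (hH'' s (interior_subset hs)))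
          (Real.exp_nonneg _))
  have h := hanti self_mem_Ici ht ht
  simpa only [sub_self, mul_zero, neg_zero, Real.exp_zero, mul_one, Real.exp_neg,
    ← div_eq_mul_inv, div_le_iff₀ (Real.exp_pos _)] using h

lemma deriv_nonneg_of_deriv2_le (hD : 0 ≤ D) (hH : ∀ t, T ≤ t → HasDerivAt H (H' t) t)
    (hH' : ∀ t, T ≤ t → HasDerivAt H' (H'' t) t) (hH'' : ∀ t, T ≤ t → H'' t ≤ D * H' t)
    (hH₀ : ∀ t, T ≤ t → 0 ≤ H t) : 0 ≤ H' T := by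
  by_contra! hneg
  obtain ⟨t, ht, hlt⟩ := exists_neg_of_deriv_le_neg (neg_pos.2 hneg) hH fun s hs => by
    have h := deriv_sub_le_mul_exp (B := 0) hH' (by simpa using hH'') hs
    have : 1 ≤ Real.exp (D * (s - T)) :=
      Real.one_le_exp (mul_nonneg hD (sub_nonneg.2 hs))
    nlinarith
  exact hlt.not_ge (hH₀ t ht)

lemma monotoneOn_of_deriv_nonneg_Ici (hH : ∀ t, T ≤ t → HasDerivAt H (H' t) t)
    (hH' : ∀ t, T ≤ t → 0 ≤ H' t) : MonotoneOn H (Ici T) :=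
  monotoneOn_of_deriv_nonneg (convex_Ici T)
    (fun t ht => (hH t ht).continuousAt.continuousWithinAt)
    (fun t ht => (hH t (interior_subset ht)).differentiableAt.differentiableWithinAt)
    fun t ht => (hH' t (interior_subset ht)).trans_eq (hH t (interior_subset ht)).deriv.symm

lemma monotoneOn_of_deriv2_le (hD : 0 ≤ D) (hH : ∀ t, T ≤ t → HasDerivAt H (H' t) t)
    (hH' : ∀ t, T ≤ t → HasDerivAt H' (H'' t) t) (hH'' : ∀ t, T ≤ t → H'' t ≤ D * H' t)
    (hH₀ : ∀ t, T ≤ t → 0 ≤ H t) : MonotoneOn H (Ici T) :=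
  monotoneOn_of_deriv_nonneg_Ici hH fun _ ht =>
    deriv_nonneg_of_deriv2_le hD (fun s hs => hH s (ht.trans hs))
      (fun s hs => hH' s (ht.trans hs)) (fun s hs => hH'' s (ht.trans hs))
      fun s hs => hH₀ s (ht.trans hs)

lemma le_deriv_of_deriv2_le (hD : 0 < D) (hH : ∀ t, T ≤ t → HasDerivAt H (H' t) t)
    (hH' : ∀ t, T ≤ t → HasDerivAt H' (H'' t) t)
    (hH'' : ∀ t, T ≤ t → H'' t ≤ D * (H' t - B)) (hH₀ : ∀ t, T ≤ t → 0 ≤ H t) : B ≤ H' T := by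
  by_contra! hlt
  have hlim : Tendsto (fun t => B + (H' T - B) * Real.exp (D * (t - T))) atTop atBot :=
    tendsto_atBot_add_const_left _ _ <| (Real.tendsto_exp_atTop.comp <|
      (tendsto_atTop_add_const_right _ (-T) tendsto_id).const_mul_atTop hD).const_mul_atTop_of_neg
        (sub_neg.2 hlt)
  obtain ⟨S, hS⟩ := eventually_atTop.1 (hlim.eventually_le_atBot (-1))
  obtain ⟨t, ht, hneg⟩ := exists_neg_of_deriv_le_neg (T := max S T) one_pos
    (fun t ht => hH t (le_of_max_le_right ht)) fun t ht => by
      have h := deriv_sub_le_mul_exp hH' hH'' (le_of_max_le_right ht)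
      linarith [hS t (le_of_max_le_left ht)]
  exact hneg.not_ge (hH₀ t (le_of_max_le_right ht))

lemma not_forall_mul_rpow_le_deriv (hq : 1 < q) (hc : 0 < c)
    (hH : ∀ t, T ≤ t → HasDerivAt H (H' t) t) (hH₀ : ∀ t, T ≤ t → 0 < H t) :
    ¬ ∀ t, T ≤ t → c * H t ^ q ≤ H' t := by
  intro hH'
  obtain ⟨t, ht, hneg⟩ := exists_neg_of_deriv_le_neg (H := fun t => H t ^ (1 - q)) (T := T)
    (mul_pos (sub_pos.2 hq) hc)
    (fun t ht => (hH t ht).rpow_const (Or.inl (hH₀ t ht).ne')) fun t ht => by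
      have hpos := Real.rpow_pos_of_pos (hH₀ t ht) (1 - q - 1)
      calc H' t * (1 - q) * H t ^ (1 - q - 1)
          ≤ c * H t ^ q * (1 - q) * H t ^ (1 - q - 1) :=
            mul_le_mul_of_nonneg_right
              (mul_le_mul_of_nonpos_right (hH' t ht) (by linarith)) hpos.le
        _ = (1 - q) * c * (H t ^ q * H t ^ (1 - q - 1)) := by ring
        _ = -((q - 1) * c) := by
            rw [← Real.rpow_add (hH₀ t ht)]
            norm_num
            ring
  exact hneg.not_ge (Real.rpow_nonneg (hH₀ t ht).le _)

/- Comparing on `[t, ∞)` with the constant source `c * H t ^ q` turns the second order inequality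
into the Riccati inequality `H' ≥ c / (D + 1) * H ^ q`, which blows up in finite time. -/
lemma not_forall_deriv2_le_sub_mul_rpow (hD : 0 ≤ D) (hq : 1 < q) (hc : 0 < c)
    (hH : ∀ t, T ≤ t → HasDerivAt H (H' t) t) (hH' : ∀ t, T ≤ t → HasDerivAt H' (H'' t) t)
    (hH₀ : ∀ t, T ≤ t → 0 < H t) : ¬ ∀ t, T ≤ t → H'' t ≤ D * H' t - c * H t ^ q := by
  intro hH''
  have hH'₀ (t) (ht : T ≤ t) : 0 ≤ H' t :=
    deriv_nonneg_of_deriv2_le hD (fun s hs => hH s (ht.trans hs)) (fun s hs => hH' s (ht.trans hs))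
      (fun s hs => (hH'' s (ht.trans hs)).trans <| sub_le_self _ <|
        mul_nonneg hc.le (Real.rpow_nonneg (hH₀ s (ht.trans hs)).le q))
      fun s hs => (hH₀ s (ht.trans hs)).le
  have hD' : 0 < D + 1 := by linarith
  refine not_forall_mul_rpow_le_deriv hq (div_pos hc hD') hH hH₀ fun t ht => ?_
  refine le_deriv_of_deriv2_le hD' (fun s hs => hH s (ht.trans hs))
    (fun s hs => hH' s (ht.trans hs)) (fun s hs => ?_) fun s hs => (hH₀ s (ht.trans hs)).le
  have hpow : c * H t ^ q ≤ c * H s ^ q := mul_le_mul_of_nonneg_left (Real.rpow_le_rpow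
    (hH₀ t ht).le (monotoneOn_of_deriv_nonneg_Ici hH hH'₀ ht (ht.trans hs) hs) (by linarith)) hc.le
  have hsource : (D + 1) * (c / (D + 1) * H t ^ q) = c * H t ^ q := by field_simp
  linarith [hH'' s (ht.trans hs), hH'₀ s (ht.trans hs)]

end DifferentialInequalities

section ConeMean

variable {N : ℕ} {Ω : Set (Euc N)} {ρ lam1 μ k t : ℝ} {φ v f : Euc N → ℝ}

/-- The logarithmic annulus `{|t - log |x|| < r}`, that is, `exp (t - r) < |x| < exp (t + r)` away
from the origin. -/
def logAnnulus (N : ℕ) (t r : ℝ) : Set (Euc N) := {x | |t - Real.log ‖x‖| < r}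

lemma mem_logAnnulus {r : ℝ} {x : Euc N} : x ∈ logAnnulus N t r ↔ |t - Real.log ‖x‖| < r :=
  Iff.rfl

lemma bump_eq_zero_of_notMem_logAnnulus (m : ContDiffBump (0 : ℝ)) {x : Euc N}
    (hx : x ∉ logAnnulus N t m.rOut) : m (t - Real.log ‖x‖) = 0 :=
  m.zero_of_le_dist <| by rw [Real.dist_eq, sub_zero]; exact not_lt.1 hx

lemma measurableSet_logAnnulus (t r : ℝ) : MeasurableSet (logAnnulus N t r) :=
  measurableSet_lt (by fun_prop) measurable_const

lemma norm_le_of_mem_logAnnulus {r : ℝ} {x : Euc N} (hx : x ∈ logAnnulus N t r) :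
    ‖x‖ ≤ Real.exp (t + r) :=
  (Real.le_exp_log _).trans (Real.exp_le_exp.2 (by linarith [(abs_lt.1 (mem_logAnnulus.1 hx)).1]))

lemma norm_rpow_le_of_mem_logAnnulus {r : ℝ} {x : Euc N} (hx₀ : x ≠ 0)
    (hx : x ∈ logAnnulus N t r) (a : ℝ) : ‖x‖ ^ a ≤ Real.exp (|a| * r) * Real.exp (a * t) := by
  rw [norm_rpow_eq_exp_mul_log hx₀, ← Real.exp_add, Real.exp_le_exp]
  have h : a * (Real.log ‖x‖ - t) ≤ |a| * r := (le_abs_self _).trans <| by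
    rw [abs_mul, abs_sub_comm]
    exact mul_le_mul_of_nonneg_left (le_of_lt hx) (abs_nonneg a)
  linarith

lemma measure_logAnnulus_ne_top (t r : ℝ) : volume (logAnnulus N t r) ≠ ⊤ :=
  measure_ne_top_of_subset
    (fun _ hx => mem_closedBall_zero_iff.2 (norm_le_of_mem_logAnnulus hx))
    (measure_closedBall_lt_top (x := (0 : Euc N)) (r := Real.exp (t + r))).ne

lemma measureReal_logAnnulus_le (t r : ℝ) : volume.real (logAnnulus N t r) ≤
    volume.real (Metric.closedBall (0 : Euc N) 1) * Real.exp (N * r) * Real.exp (N * t) :=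
  calc volume.real (logAnnulus N t r)
      ≤ volume.real (Metric.closedBall (0 : Euc N) (Real.exp (t + r))) :=
        measureReal_mono (fun x hx => mem_closedBall_zero_iff.2 (norm_le_of_mem_logAnnulus hx))
          measure_closedBall_lt_top.ne
    _ = _ := by
        rw [Measure.addHaar_real_closedBall' volume (0 : Euc N) (Real.exp_nonneg _),
          finrank_euclideanSpace_fin, ← Real.exp_nat_mul, mul_add, Real.exp_add]
        ring

lemma measure_coneGT_inter_logAnnulus_pos (hΩ : IsOpen (cone N Ω)) (hne : (cone N Ω).Nonempty)
    (hρ : 0 < ρ) (ht : Real.log ρ < t) {r : ℝ} (hr : 0 < r) :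
    0 < volume (coneGT N ρ Ω ∩ logAnnulus N t r) := by
  obtain ⟨y, hy₀, hy⟩ := hne
  have hlog : ContinuousOn (fun x : Euc N => |t - Real.log ‖x‖|) (coneGT N ρ Ω) :=
    (continuousOn_const.sub (continuousOn_id.norm.log fun x hx =>
      norm_ne_zero_iff.2 (ne_zero_of_mem_coneGT hρ hx))).abs
  refine (hlog.isOpen_inter_preimage (isOpen_coneGT hρ hΩ) isOpen_Iio).measure_pos volume
    ⟨(Real.exp t * ‖y‖⁻¹) • y, ?_⟩
  have hnorm : ‖(Real.exp t * ‖y‖⁻¹) • y‖ = Real.exp t := by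
    simp [norm_smul, hy₀]
  refine ⟨⟨by rwa [hnorm, ← Real.log_lt_iff_lt_exp hρ], ?_⟩, by simp [hnorm, hr]⟩
  rwa [hnorm, smul_smul, inv_mul_cancel_left₀ (Real.exp_ne_zero t)]

namespace DirichletEigenpair

variable (hφ : DirichletEigenpair N Ω lam1 φ)
include hφ

lemma logMean_homExt_pos (hΩ : IsOpen (cone N Ω)) (hne : (cone N Ω).Nonempty) (hρ : 0 < ρ)
    (hv₀ : ∀ x ∈ coneGT N ρ Ω, 0 < v x)
    (hv : LocallyIntegrable v (volume.restrict (coneGT N ρ Ω))) (k : ℝ)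
    (m : ContDiffBump (0 : ℝ)) (ht : Real.log ρ < t) :
    0 < logMean (volume.restrict (coneGT N ρ Ω)) (fun x => homExt k φ x * v x) m t := by
  have hU := (isOpen_coneGT hρ hΩ).measurableSet
  refine logMean_pos (locallyIntegrable_restrict_continuousOn_mul hv
    (continuousOn_homExt hρ hφ.contOn k))
    (ae_restrict_of_forall_mem hU fun x => ne_zero_of_mem_coneGT hρ)
    m.continuous m.hasCompactSupport (fun _ => m.nonneg)
    (ae_restrict_of_forall_mem hU fun x hx =>
      mul_pos (hφ.homExt_pos (coneGT_subset_cone hρ hx) k) (hv₀ x hx)) ?_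
  have hsupp : {x : Euc N | m (t - Real.log ‖x‖) ≠ 0} = logAnnulus N t m.rOut := by
    ext x
    simpa [mem_logAnnulus, Metric.mem_ball, Real.dist_eq] using
      Set.ext_iff.1 m.support_eq (t - Real.log ‖x‖)
  rw [hsupp, Measure.restrict_apply (measurableSet_logAnnulus t _), inter_comm]
  exact (measure_coneGT_inter_logAnnulus_pos hΩ hne hρ ht m.rOut_pos).ne'

lemma logMean_add_deriv2_le (hΩ : IsOpen (cone N Ω)) (hρ : 0 < ρ)
    (hk : k * (k + N - 2) = lam1 - μ) (hv : ContDiffOn ℝ 2 v (coneGT N ρ Ω))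
    (hv₀ : ∀ x ∈ coneGT N ρ Ω, 0 ≤ v x)
    (hvloc : LocallyIntegrable v (volume.restrict (coneGT N ρ Ω)))
    (hf : LocallyIntegrable f (volume.restrict (coneGT N ρ Ω)))
    (hfv : ∀ x ∈ coneGT N ρ Ω, f x ≤ hardyOp μ v x) (m : ContDiffBump (0 : ℝ))
    (ht : Real.log ρ + m.rOut < t) :
    logMean (volume.restrict (coneGT N ρ Ω)) (fun x => homExt k φ x * f x) m t +
        logMean (volume.restrict (coneGT N ρ Ω)) (fun x => homExt (k - 2) φ x * v x)
          (deriv (deriv m)) t ≤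
      (2 * k + N - 2) * logMean (volume.restrict (coneGT N ρ Ω))
        (fun x => homExt (k - 2) φ x * v x) (deriv m) t := by
  have hm : ContDiff ℝ 2 m := m.contDiff
  have hm' : ContDiff ℝ 1 (deriv m) := hm.deriv'
  have hd : deriv (fun s => m (t - s)) = fun s => -deriv m (t - s) :=
    funext fun s => deriv_comp_const_sub m t s
  have hd' : deriv (fun s => -deriv m (t - s)) = fun s => deriv (deriv m) (t - s) := by
    funext s
    rw [deriv.fun_neg, deriv_comp_const_sub, neg_neg]
  have hsupp : tsupport (fun s => m (t - s)) ⊆ Ioi (Real.log ρ) := by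
    refine (tsupport_comp_subset_preimage m (f := fun s => t - s) (by fun_prop)).trans
      fun s hs => ?_
    rw [mem_preimage, m.tsupport_eq, mem_closedBall_zero_iff, Real.norm_eq_abs] at hs
    exact mem_Ioi.2 (by linarith [(abs_le.1 hs).2])
  have h := hφ.setIntegral_radial_mul_le hΩ hρ hk (χ := fun s => m (t - s))
    (hm.comp (contDiff_const.sub contDiff_id)) (fun _ => m.nonneg)
    (m.hasCompactSupport.comp_homeomorph (Homeomorph.subLeft t)) hsupp hv hv₀ hvloc hf hfv
  have hloc := locallyIntegrable_restrict_continuousOn_mul hvloc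
    (continuousOn_homExt hρ hφ.contOn (k - 2))
  have hae : ∀ᵐ x ∂volume.restrict (coneGT N ρ Ω), x ≠ 0 :=
    ae_restrict_of_forall_mem (isOpen_coneGT hρ hΩ).measurableSet
      fun x => ne_zero_of_mem_coneGT hρ
  have hint' := integrable_logMean hloc hae hm'.continuous m.hasCompactSupport.deriv t
  have hint'' := integrable_logMean hloc hae (hm'.continuous_deriv le_rfl)
    m.hasCompactSupport.deriv.deriv t
  simp only [hd, hd'] at h
  rw [logMean, logMean, logMean, ← le_sub_iff_add_le, ← integral_const_mul,
    ← integral_sub (hint'.const_mul _) hint'']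
  refine h.trans_eq ?_
  rw [← integral_neg]
  exact integral_congr_ae (ae_of_all _ fun x => by ring)

end DirichletEigenpair

end ConeMean

section Supersolution

variable {N : ℕ} {Ω : Set (Euc N)} {ρ lam1 μ k t : ℝ} {φ u v : Euc N → ℝ}

lemma measurableSet_sep_le {X : Type*} [TopologicalSpace X] [MeasurableSpace X]
    [OpensMeasurableSpace X] {U : Set X} {g : X → ℝ} (hU : IsOpen U) (hg : ContinuousOn g U)
    (a : ℝ) : MeasurableSet {x ∈ U | a ≤ g x} := by
  have h : {x ∈ U | a ≤ g x} = U \ (U ∩ g ⁻¹' Iio a) := by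
    ext x
    simp
  rw [h]
  exact hU.measurableSet.diff (hg.isOpen_inter_preimage hU isOpen_Iio).measurableSet

namespace DirichletEigenpair

variable (hφ : DirichletEigenpair N Ω lam1 φ)
include hφ

lemma contDiffOn_homExt (hΩ : IsOpen (cone N Ω)) (a : ℝ) :
    ContDiffOn ℝ 2 (homExt a φ) (cone N Ω) := fun _ hx =>
  (contDiffAt_homExt hx.1 a (hφ.contDiffAt_angularExt hΩ hx)).contDiffWithinAt

lemma hardyOp_homExt (hΩ : IsOpen (cone N Ω)) {x : Euc N} (hx : x ∈ cone N Ω) (μ a : ℝ) :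
    hardyOp μ (homExt a φ) x = (lam1 - μ - a * (a + N - 2)) * homExt (a - 2) φ x := by
  have hpow : ‖x‖ ^ (a - 2) = ‖x‖ ^ a * ‖x‖ ^ (-(2 : ℝ)) :=
    Real.rpow_add (norm_pos_iff.2 hx.1) _ _
  rw [hardyOp, laplacian_homExt hx.1 a (hφ.contDiffAt_angularExt hΩ hx), hφ.laplacian_angularExt hx,
    finrank_euclideanSpace_fin, homExt, homExt, hpow]
  ring

lemma exists_le_logMean_of_hardyOp_nonneg (hΩ : IsOpen (cone N Ω)) (hne : (cone N Ω).Nonempty)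
    (hρ : 0 < ρ) (hk : k * (k + N - 2) = lam1 - μ) (hk₀ : 0 ≤ 2 * k + N - 2)
    (hv : ContDiffOn ℝ 2 v (coneGT N ρ Ω)) (hv₀ : ∀ x ∈ coneGT N ρ Ω, 0 < v x)
    (hvloc : LocallyIntegrable v (volume.restrict (coneGT N ρ Ω)))
    (hvμ : ∀ x ∈ coneGT N ρ Ω, 0 ≤ hardyOp μ v x) (m : ContDiffBump (0 : ℝ)) :
    ∃ c > 0, ∃ T, ∀ t ≥ T, c ≤ logMean (volume.restrict (coneGT N ρ Ω))
      (fun x => homExt (k - 2) φ x * v x) m t := by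
  have hT : ∀ t ≥ Real.log ρ + m.rOut + 1, Real.log ρ + m.rOut < t := fun t ht => by linarith
  have hpos : ∀ t ≥ Real.log ρ + m.rOut + 1, 0 < logMean (volume.restrict (coneGT N ρ Ω))
      (fun x => homExt (k - 2) φ x * v x) m t := fun t ht =>
    hφ.logMean_homExt_pos hΩ hne hρ hv₀ hvloc (k - 2) m (by linarith [m.rOut_pos, hT t ht])
  have hloc := locallyIntegrable_restrict_continuousOn_mul hvloc
    (continuousOn_homExt hρ hφ.contOn (k - 2))
  have hae : ∀ᵐ x ∂volume.restrict (coneGT N ρ Ω), x ≠ 0 :=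
    ae_restrict_of_forall_mem (isOpen_coneGT hρ hΩ).measurableSet
      fun x => ne_zero_of_mem_coneGT hρ
  have hm : ContDiff ℝ 2 m := m.contDiff
  have hmono := monotoneOn_of_deriv2_le hk₀
    (fun t _ => hasDerivAt_logMean hloc hae m.contDiff m.hasCompactSupport t)
    (fun t _ => hasDerivAt_logMean hloc hae hm.deriv' m.hasCompactSupport.deriv t)
    (fun t ht => ?_) fun t ht => (hpos t ht).le
  · exact ⟨_, hpos _ le_rfl, _, fun t ht => hmono self_mem_Ici ht ht⟩
  · have h := hφ.logMean_add_deriv2_le hΩ hρ hk hv (fun x hx => (hv₀ x hx).le) hvloc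
      locallyIntegrable_zero hvμ m (hT t ht)
    simpa [logMean] using h

lemma bump_mul_homExt_mul_le {x : Euc N} (hx : x ∈ cone N Ω) (m : ContDiffBump (0 : ℝ))
    {S : Set (Euc N)} {a d : ℝ} (ha : 0 ≤ a) (hv₀ : 0 ≤ v x) (hvd : v x ≤ ‖x‖ ^ d)
    (hvS : x ∈ logAnnulus N t m.rOut → x ∉ S → v x ≤ a * Real.exp (d * t)) (b : ℝ) :
    m (t - Real.log ‖x‖) * (homExt b φ x * v x) ≤ Real.exp (|b| * m.rOut) * Real.exp (b * t) *
      ((logAnnulus N t m.rOut).indicator (fun _ => a * Real.exp (d * t)) x +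
        S.indicator (fun _ => Real.exp (|d| * m.rOut) * Real.exp (d * t)) x) := by
  have hS₀ : 0 ≤ S.indicator (fun _ => Real.exp (|d| * m.rOut) * Real.exp (d * t)) x :=
    indicator_nonneg (fun _ _ => by positivity) x
  by_cases hxt : x ∈ logAnnulus N t m.rOut
  · have hsplit : v x ≤ a * Real.exp (d * t) +
        S.indicator (fun _ => Real.exp (|d| * m.rOut) * Real.exp (d * t)) x := by
      by_cases hxS : x ∈ S
      · rw [indicator_of_mem hxS]
        exact (hvd.trans (norm_rpow_le_of_mem_logAnnulus hx.1 hxt d)).trans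
          (le_add_of_nonneg_left (by positivity))
      · exact (hvS hxt hxS).trans (le_add_of_nonneg_right hS₀)
    rw [indicator_of_mem hxt]
    calc m (t - Real.log ‖x‖) * (homExt b φ x * v x)
        ≤ homExt b φ x * v x :=
          mul_le_of_le_one_left (mul_nonneg (hφ.homExt_pos hx b).le hv₀) m.le_one
      _ ≤ _ := mul_le_mul ((hφ.homExt_le_norm_rpow hx b).trans
          (norm_rpow_le_of_mem_logAnnulus hx.1 hxt b)) hsplit hv₀ (by positivity)
  · rw [bump_eq_zero_of_notMem_logAnnulus m hxt, zero_mul]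
    exact mul_nonneg (by positivity)
      (add_nonneg (indicator_nonneg (fun _ _ => by positivity) x) hS₀)

lemma logMean_homExt_le_add_measureReal (hΩ : IsOpen (cone N Ω)) (hρ : 0 < ρ)
    (m : ContDiffBump (0 : ℝ)) {S : Set (Euc N)} (hS : MeasurableSet S) (hS' : volume S ≠ ⊤)
    {a d : ℝ} (ha : 0 ≤ a) (hv₀ : ∀ x ∈ coneGT N ρ Ω, 0 ≤ v x)
    (hvd : ∀ x ∈ coneGT N ρ Ω, v x ≤ ‖x‖ ^ d)
    (hvS : ∀ x ∈ coneGT N ρ Ω ∩ logAnnulus N t m.rOut, x ∉ S → v x ≤ a * Real.exp (d * t))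
    (hvloc : LocallyIntegrable v (volume.restrict (coneGT N ρ Ω))) (b : ℝ) :
    logMean (volume.restrict (coneGT N ρ Ω)) (fun x => homExt b φ x * v x) m t ≤
      Real.exp (|b| * m.rOut) * Real.exp (b * t) *
        (volume.real (logAnnulus N t m.rOut) * (a * Real.exp (d * t)) +
          volume.real S * (Real.exp (|d| * m.rOut) * Real.exp (d * t))) := by
  have hU := (isOpen_coneGT hρ hΩ).measurableSet
  have hA := measurableSet_logAnnulus (N := N) t m.rOut
  have hint := integrable_logMean (locallyIntegrable_restrict_continuousOn_mul hvloc
    (continuousOn_homExt hρ hφ.contOn b))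
    (ae_restrict_of_forall_mem hU fun x => ne_zero_of_mem_coneGT hρ) m.continuous
    m.hasCompactSupport t
  have hintA : Integrable ((logAnnulus N t m.rOut).indicator fun _ => a * Real.exp (d * t)) :=
    (integrableOn_const (measure_logAnnulus_ne_top t m.rOut)).integrable_indicator hA
  have hintS : Integrable (S.indicator fun _ => Real.exp (|d| * m.rOut) * Real.exp (d * t)) :=
    (integrableOn_const hS').integrable_indicator hS
  calc logMean (volume.restrict (coneGT N ρ Ω)) (fun x => homExt b φ x * v x) m t
      ≤ ∫ x in coneGT N ρ Ω, Real.exp (|b| * m.rOut) * Real.exp (b * t) *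
          ((logAnnulus N t m.rOut).indicator (fun _ => a * Real.exp (d * t)) x +
            S.indicator (fun _ => Real.exp (|d| * m.rOut) * Real.exp (d * t)) x) :=
        setIntegral_mono_on hint ((hintA.add hintS).const_mul _).integrableOn hU fun x hx =>
          hφ.bump_mul_homExt_mul_le (coneGT_subset_cone hρ hx) m ha (hv₀ x hx) (hvd x hx)
            (fun hxt => hvS x ⟨hx, hxt⟩) b
    _ ≤ ∫ x, Real.exp (|b| * m.rOut) * Real.exp (b * t) *
          ((logAnnulus N t m.rOut).indicator (fun _ => a * Real.exp (d * t)) x +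
            S.indicator (fun _ => Real.exp (|d| * m.rOut) * Real.exp (d * t)) x) :=
        setIntegral_le_integral ((hintA.add hintS).const_mul _) (ae_of_all _ fun x =>
          mul_nonneg (by positivity) (add_nonneg (indicator_nonneg (fun _ _ => by positivity) x)
            (indicator_nonneg (fun _ _ => by positivity) x)))
    _ = _ := by
        rw [integral_const_mul, integral_add hintA hintS, integral_indicator_const _ hA,
          integral_indicator_const _ hS, smul_eq_mul, smul_eq_mul]

lemma logMean_homExt_mul_exp_le (hΩ : IsOpen (cone N Ω)) (hρ : 0 < ρ)
    (m : ContDiffBump (0 : ℝ)) {S : Set (Euc N)} (hS : MeasurableSet S) (hS' : volume S ≠ ⊤)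
    {a d : ℝ} (ha : 0 ≤ a) (hv₀ : ∀ x ∈ coneGT N ρ Ω, 0 ≤ v x)
    (hvd : ∀ x ∈ coneGT N ρ Ω, v x ≤ ‖x‖ ^ d)
    (hvS : ∀ x ∈ coneGT N ρ Ω ∩ logAnnulus N t m.rOut, x ∉ S → v x ≤ a * Real.exp (d * t))
    (hvloc : LocallyIntegrable v (volume.restrict (coneGT N ρ Ω))) :
    logMean (volume.restrict (coneGT N ρ Ω)) (fun x => homExt (-N - d) φ x * v x) m t *
        Real.exp (N * t) ≤
      Real.exp (|-N - d| * m.rOut) *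
        (volume.real (Metric.closedBall (0 : Euc N) 1) * Real.exp (N * m.rOut) * a *
          Real.exp (N * t) + Real.exp (|d| * m.rOut) * volume.real S) := by
  set b : ℝ := -N - d
  set ω : ℝ := volume.real (Metric.closedBall (0 : Euc N) 1) * Real.exp (N * m.rOut)
  have hsum : Real.exp (b * t) * Real.exp (N * t) * Real.exp (d * t) = 1 := by
    rw [← Real.exp_add, ← Real.exp_add, Real.exp_eq_one_iff]
    ring
  calc _ ≤ Real.exp (|b| * m.rOut) * Real.exp (b * t) *
          (ω * Real.exp (N * t) * (a * Real.exp (d * t)) +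
            volume.real S * (Real.exp (|d| * m.rOut) * Real.exp (d * t))) *
          Real.exp (N * t) := by
        gcongr
        refine (hφ.logMean_homExt_le_add_measureReal hΩ hρ m hS hS' ha hv₀ hvd hvS hvloc b).trans ?_
        gcongr
        exact measureReal_logAnnulus_le t m.rOut
    _ = Real.exp (|b| * m.rOut) *
          (ω * a * Real.exp (N * t) + Real.exp (|d| * m.rOut) * volume.real S) *
          (Real.exp (b * t) * Real.exp (N * t) * Real.exp (d * t)) := by ring
    _ = _ := by rw [hsum, mul_one]

lemma exists_truncated_supersolution (hΩ : IsOpen (cone N Ω)) (hρ : 0 < ρ) {d : ℝ}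
    (hd : d * (d + N - 2) = lam1 - μ) (hu : ContDiffOn ℝ 2 u (coneGT N ρ Ω))
    (hu₀ : ∀ x ∈ coneGT N ρ Ω, 0 < u x) (huμ : ∀ x ∈ coneGT N ρ Ω, 0 ≤ hardyOp μ u x) :
    ∃ v : Euc N → ℝ, ContDiffOn ℝ 2 v (coneGT N ρ Ω) ∧ (∀ x ∈ coneGT N ρ Ω, 0 < v x) ∧
      (∀ x ∈ coneGT N ρ Ω, 0 ≤ hardyOp μ v x) ∧ (∀ x ∈ coneGT N ρ Ω, v x ≤ u x) ∧
      (∀ x ∈ coneGT N ρ Ω, v x ≤ ‖x‖ ^ d) ∧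
      LocallyIntegrable v (volume.restrict (coneGT N ρ Ω)) := by
  have hU := isOpen_coneGT hρ hΩ
  have hV : ContDiffOn ℝ 2 (homExt d φ) (coneGT N ρ Ω) :=
    (hφ.contDiffOn_homExt hΩ d).mono (coneGT_subset_cone hρ)
  have hV₀ (x) (hx : x ∈ coneGT N ρ Ω) : 0 < homExt d φ x :=
    hφ.homExt_pos (coneGT_subset_cone hρ hx) d
  have hVμ (x) (hx : x ∈ coneGT N ρ Ω) : 0 ≤ hardyOp μ (homExt d φ) x := by
    rw [hφ.hardyOp_homExt hΩ (coneGT_subset_cone hρ hx), hd, sub_self, zero_mul]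
  have hcd (x) (hx : x ∈ coneGT N ρ Ω) : ContDiffAt ℝ 2 (halfHarmonic u (homExt d φ)) x :=
    contDiffAt_halfHarmonic (hu.contDiffAt (hU.mem_nhds hx)) (hV.contDiffAt (hU.mem_nhds hx))
      (add_pos (hu₀ x hx) (hV₀ x hx)).ne'
  have hv : ContDiffOn ℝ 2 (halfHarmonic u (homExt d φ)) (coneGT N ρ Ω) :=
    fun x hx => (hcd x hx).contDiffWithinAt
  have hv₀ (x) (hx : x ∈ coneGT N ρ Ω) : 0 < halfHarmonic u (homExt d φ) x :=
    halfHarmonic_pos (hu₀ x hx) (hV₀ x hx)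
  have hvV (x) (hx : x ∈ coneGT N ρ Ω) : halfHarmonic u (homExt d φ) x ≤ homExt d φ x :=
    halfHarmonic_le_right (hu₀ x hx) (hV₀ x hx)
  refine ⟨halfHarmonic u (homExt d φ), hv, hv₀, fun x hx => ?_, fun x hx => ?_,
    fun x hx => (hvV x hx).trans (hφ.homExt_le_norm_rpow (coneGT_subset_cone hρ hx) d), ?_⟩
  · exact hardyOp_halfHarmonic_nonneg (hu.contDiffAt (hU.mem_nhds hx))
      (hV.contDiffAt (hU.mem_nhds hx)) (hu₀ x hx) (hV₀ x hx) (huμ x hx) (hVμ x hx)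
  · exact halfHarmonic_le_left (hu₀ x hx) (hV₀ x hx)
  · refine (locallyIntegrable_restrict_of_continuousOn_closure
      (continuousOn_homExt hρ hφ.contOn d)).mono
      (hv.continuousOn.aestronglyMeasurable hU.measurableSet) ?_
    refine ae_restrict_of_forall_mem hU.measurableSet fun x hx => ?_
    rw [Real.norm_of_nonneg (hv₀ x hx).le, Real.norm_of_nonneg (hV₀ x hx).le]
    exact hvV x hx

/- Since `v ≤ |x| ^ d`, a lower bound on the mean of `v` over an annulus forces `v`, hence `u`, to
be of size `|x| ^ d` on a fixed proportion of it. -/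
lemma exists_le_measureReal_superlevel (hΩ : IsOpen (cone N Ω)) (hne : (cone N Ω).Nonempty)
    (hρ : 0 < ρ) {d : ℝ} (hd : d * (d + N - 2) = lam1 - μ) (hd₀ : 2 * d + N - 2 ≤ 0)
    (hu : ContDiffOn ℝ 2 u (coneGT N ρ Ω)) (hu₀ : ∀ x ∈ coneGT N ρ Ω, 0 < u x)
    (huμ : ∀ x ∈ coneGT N ρ Ω, 0 ≤ hardyOp μ u x) :
    ∃ a > 0, ∃ c > 0, ∃ T, ∀ t ≥ T, c * Real.exp (N * t) ≤
      volume.real ({x ∈ coneGT N ρ Ω | a * Real.exp (d * t) ≤ u x} ∩ logAnnulus N t 1) := by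
  obtain ⟨v, hv, hv₀, hvμ, hvu, hvd, hvloc⟩ := hφ.exists_truncated_supersolution hΩ hρ hd hu hu₀ huμ
  let m : ContDiffBump (0 : ℝ) := ⟨1 / 2, 1, by norm_num, by norm_num⟩
  obtain ⟨c, hc, T, hcT⟩ := hφ.exists_le_logMean_of_hardyOp_nonneg hΩ hne hρ
    (k := 2 - N - d) (by linear_combination hd) (by linarith) hv hv₀ hvloc hvμ m
  rw [show 2 - N - d - 2 = -N - d by ring] at hcT
  set β : ℝ := Real.exp |-N - d|
  have hβ : 0 < β := Real.exp_pos _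
  set ω : ℝ := volume.real (Metric.closedBall (0 : Euc N) 1) * Real.exp N
  have hω : 0 ≤ ω := by positivity
  set a : ℝ := c / (2 * β * (ω + 1))
  refine ⟨a, by positivity, c / (2 * β * Real.exp |d|), by positivity, T, fun t ht => ?_⟩
  set S := {x ∈ coneGT N ρ Ω | a * Real.exp (d * t) ≤ u x} ∩ logAnnulus N t 1
  have hS : MeasurableSet S :=
    (measurableSet_sep_le (isOpen_coneGT hρ hΩ) hu.continuousOn _).inter
      (measurableSet_logAnnulus t 1)
  have hS' : volume S ≠ ⊤ :=
    measure_ne_top_of_subset inter_subset_right (measure_logAnnulus_ne_top t 1)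
  have hupper := hφ.logMean_homExt_mul_exp_le hΩ hρ m hS hS' (a := a) (by positivity)
    (fun x hx => (hv₀ x hx).le) hvd (fun x hx hxS => (hvu x hx.1).trans
      (not_le.1 fun h => hxS ⟨⟨hx.1, h⟩, hx.2⟩).le) hvloc
  have hlower := mul_le_mul_of_nonneg_right (hcT t ht) (Real.exp_nonneg (N * t))
  have hsmall : β * (ω * a) ≤ c / 2 := by
    rw [show β * (ω * a) = c / 2 * (ω / (ω + 1)) by simp only [a]; field_simp]
    exact mul_le_of_le_one_right (by positivity) (div_le_one_of_le₀ (by linarith) (by linarith))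
  rw [div_mul_eq_mul_div, div_le_iff₀ (by positivity)]
  simp only [m, mul_one] at hupper
  nlinarith [mul_le_mul_of_nonneg_right hsmall (Real.exp_nonneg (N * t))]

end DirichletEigenpair

end Supersolution

section RieszLowerBound

variable {N : ℕ} {Ω : Set (Euc N)} {ρ lam1 μ d α p : ℝ} {φ u : Euc N → ℝ}

lemma ofReal_le_setLIntegral_riesz {x : Euc N} {S : Set (Euc N)} {t a c : ℝ} (hα : 0 ≤ α)
    (hp : 0 ≤ p) (ha : 0 ≤ a) (hSm : MeasurableSet S) (hS : S ⊆ logAnnulus N t 1)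
    (hS₀ : ∀ y ∈ S, y ≠ 0) (hc : c ≤ volume.real S) (hu : ∀ y ∈ S, a ≤ u y)
    (hx : ‖x‖ ≤ Real.exp (t - 1)) :
    ENNReal.ofReal (a ^ p * (2 * Real.exp (t + 1)) ^ (-α) * c) ≤
      ∫⁻ y in S, ENNReal.ofReal (u y ^ p * ‖x - y‖ ^ (-α)) := by
  have hkernel (y) (hy : y ∈ S) : ENNReal.ofReal (a ^ p * (2 * Real.exp (t + 1)) ^ (-α)) ≤
      ENNReal.ofReal (u y ^ p * ‖x - y‖ ^ (-α)) := by
    have hlog : t - 1 < Real.log ‖y‖ := by linarith [(abs_lt.1 (mem_logAnnulus.1 (hS hy))).2]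
    have hlt : ‖x‖ < ‖y‖ :=
      hx.trans_lt ((Real.lt_log_iff_exp_lt (norm_pos_iff.2 (hS₀ y hy))).1 hlog)
    have hsub : 0 < ‖x - y‖ := norm_pos_iff.2 (sub_ne_zero.2 fun h => hlt.ne (congrArg _ h))
    have hle : ‖x - y‖ ≤ 2 * Real.exp (t + 1) := by
      linarith [norm_sub_le x y, norm_le_of_mem_logAnnulus (hS hy)]
    exact ENNReal.ofReal_le_ofReal (mul_le_mul (Real.rpow_le_rpow ha (hu y hy) hp)
      (Real.rpow_le_rpow_of_nonpos hsub hle (neg_nonpos.2 hα)) (by positivity)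
      (Real.rpow_nonneg (ha.trans (hu y hy)) p))
  calc ENNReal.ofReal (a ^ p * (2 * Real.exp (t + 1)) ^ (-α) * c)
      ≤ ENNReal.ofReal (a ^ p * (2 * Real.exp (t + 1)) ^ (-α)) * volume S := by
        rw [ENNReal.ofReal_mul (by positivity)]
        gcongr
        exact ENNReal.ofReal_le_of_le_toReal hc
    _ = ∫⁻ _ in S, ENNReal.ofReal (a ^ p * (2 * Real.exp (t + 1)) ^ (-α)) :=
        (setLIntegral_const S _).symm
    _ ≤ ∫⁻ y in S, ENNReal.ofReal (u y ^ p * ‖x - y‖ ^ (-α)) :=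
        setLIntegral_mono' hSm hkernel

namespace DirichletEigenpair

variable (hφ : DirichletEigenpair N Ω lam1 φ)
include hφ

lemma exists_le_setLIntegral_riesz (hΩ : IsOpen (cone N Ω)) (hne : (cone N Ω).Nonempty)
    (hρ : 0 < ρ) (hd : d * (d + N - 2) = lam1 - μ) (hd₀ : 2 * d + N - 2 ≤ 0)
    (hu : ContDiffOn ℝ 2 u (coneGT N ρ Ω)) (hu₀ : ∀ x ∈ coneGT N ρ Ω, 0 < u x)
    (huμ : ∀ x ∈ coneGT N ρ Ω, 0 ≤ hardyOp μ u x) (hα : 0 ≤ α) (hp : 0 ≤ p) :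
    ∃ K > 0, ∃ T, ∀ t ≥ T, ∀ x : Euc N, ‖x‖ ≤ Real.exp (t - 1) →
      ENNReal.ofReal (K * Real.exp ((N + p * d - α) * t)) ≤
        ∫⁻ y in coneGT N ρ Ω ∩ logAnnulus N t 1, ENNReal.ofReal (u y ^ p * ‖x - y‖ ^ (-α)) := by
  obtain ⟨a, ha, c, hc, T, hT⟩ := hφ.exists_le_measureReal_superlevel hΩ hne hρ hd hd₀ hu hu₀ huμ
  refine ⟨a ^ p * (2 * Real.exp 1) ^ (-α) * c, by positivity, T, fun t ht x hx => ?_⟩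
  have hconst : a ^ p * (2 * Real.exp 1) ^ (-α) * c * Real.exp ((N + p * d - α) * t) =
      (a * Real.exp (d * t)) ^ p * (2 * Real.exp (t + 1)) ^ (-α) * (c * Real.exp (N * t)) := by
    have hexp : (2 * Real.exp (t + 1)) ^ (-α) = (2 * Real.exp 1) ^ (-α) * Real.exp (t * -α) := by
      rw [add_comm t, Real.exp_add, ← mul_assoc, Real.mul_rpow (by positivity) (by positivity),
        Real.exp_mul]
    rw [hexp, Real.mul_rpow ha.le (Real.exp_nonneg _), ← Real.exp_mul,
      show (N + p * d - α) * t = d * t * p + t * -α + N * t by ring, Real.exp_add, Real.exp_add]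
    ring
  rw [hconst]
  exact (ofReal_le_setLIntegral_riesz hα hp (by positivity)
    ((measurableSet_sep_le (isOpen_coneGT hρ hΩ) hu.continuousOn _).inter
      (measurableSet_logAnnulus t 1)) inter_subset_right
    (fun y hy => ne_zero_of_mem_coneGT hρ hy.1.1) (hT t ht) (fun y hy => hy.1.2) hx).trans
    (lintegral_mono_set (inter_subset_inter_left _ (sep_subset _ _)))

lemma lt_of_rieszConv_ne_top (hΩ : IsOpen (cone N Ω)) (hne : (cone N Ω).Nonempty)
    (hρ : 0 < ρ) (hd : d * (d + N - 2) = lam1 - μ) (hd₀ : 2 * d + N - 2 ≤ 0)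
    (hu : ContDiffOn ℝ 2 u (coneGT N ρ Ω)) (hu₀ : ∀ x ∈ coneGT N ρ Ω, 0 < u x)
    (huμ : ∀ x ∈ coneGT N ρ Ω, 0 ≤ hardyOp μ u x) (hα : 0 ≤ α) (hp : 0 ≤ p) {x : Euc N}
    (hfin : rieszConv N α ρ Ω (fun y => u y ^ p) x ≠ ⊤) : N + p * d < α := by
  obtain ⟨K, hK, T, hT⟩ :=
    hφ.exists_le_setLIntegral_riesz hΩ hne hρ hd hd₀ hu hu₀ huμ hα hp
  by_contra! hle
  set T' := max (max T 0) (Real.log ‖x‖ + 1)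
  let t (j : ℕ) : ℝ := T' + 2 * j
  have hT' (j : ℕ) : T' ≤ t j := le_add_of_nonneg_right (by positivity)
  have hdisj : Pairwise (Function.onFun Disjoint fun j => coneGT N ρ Ω ∩ logAnnulus N (t j) 1) := by
    intro i j hij
    refine disjoint_left.2 fun y hi hj => hij ?_
    obtain ⟨hi₁, hi₂⟩ := abs_lt.1 (mem_logAnnulus.1 hi.2)
    obtain ⟨hj₁, hj₂⟩ := abs_lt.1 (mem_logAnnulus.1 hj.2)
    have h₁ : (i : ℝ) < j + 1 := by linarith [show t i - t j = 2 * (i - j) by simp only [t]; ring]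
    have h₂ : (j : ℝ) < i + 1 := by linarith [show t i - t j = 2 * (i - j) by simp only [t]; ring]
    norm_cast at h₁ h₂
    lia
  refine hfin (top_unique ?_)
  calc ⊤ = ∑' _ : ℕ, ENNReal.ofReal K :=
        (ENNReal.tsum_const_eq_top_of_ne_zero (ENNReal.ofReal_pos.2 hK).ne').symm
    _ ≤ ∑' j, ∫⁻ y in coneGT N ρ Ω ∩ logAnnulus N (t j) 1,
          ENNReal.ofReal (u y ^ p * ‖x - y‖ ^ (-α)) := by
        refine ENNReal.tsum_le_tsum fun j => ?_
        have hj₀ : 0 ≤ t j := (le_max_right _ _).trans ((le_max_left _ _).trans (hT' j))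
        have hxj : ‖x‖ ≤ Real.exp (t j - 1) := (Real.le_exp_log _).trans
          (Real.exp_le_exp.2 (le_sub_iff_add_le.2 ((le_max_right _ _).trans (hT' j))))
        refine (ENNReal.ofReal_le_ofReal (le_mul_of_one_le_right hK.le (Real.one_le_exp ?_))).trans
          (hT (t j) ((le_max_left _ _).trans ((le_max_left _ _).trans (hT' j))) x hxj)
        exact mul_nonneg (by linarith) hj₀
    _ = ∫⁻ y in ⋃ j, coneGT N ρ Ω ∩ logAnnulus N (t j) 1,
          ENNReal.ofReal (u y ^ p * ‖x - y‖ ^ (-α)) :=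
        (lintegral_iUnion (fun j => (isOpen_coneGT hρ hΩ).measurableSet.inter
          (measurableSet_logAnnulus _ 1)) hdisj _).symm
    _ ≤ rieszConv N α ρ Ω (fun y => u y ^ p) x :=
        lintegral_mono_set (iUnion_subset fun _ => inter_subset_left)

lemma exists_mul_rpow_le_rieszConv (hΩ : IsOpen (cone N Ω)) (hne : (cone N Ω).Nonempty)
    (hρ : 0 < ρ) (hd : d * (d + N - 2) = lam1 - μ) (hd₀ : 2 * d + N - 2 ≤ 0)
    (hu : ContDiffOn ℝ 2 u (coneGT N ρ Ω)) (hu₀ : ∀ x ∈ coneGT N ρ Ω, 0 < u x)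
    (huμ : ∀ x ∈ coneGT N ρ Ω, 0 ≤ hardyOp μ u x) (hα : 0 ≤ α) (hp : 0 ≤ p) :
    ∃ K > 0, ∃ R ≥ ρ, ∀ x ∈ coneGT N R Ω, ENNReal.ofReal (K * ‖x‖ ^ (N + p * d - α)) ≤
      rieszConv N α ρ Ω (fun y => u y ^ p) x := by
  obtain ⟨K, hK, T, hT⟩ :=
    hφ.exists_le_setLIntegral_riesz hΩ hne hρ hd hd₀ hu hu₀ huμ hα hp
  refine ⟨K * Real.exp (N + p * d - α), by positivity, max ρ (Real.exp T), le_max_left _ _,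
    fun x hx => ?_⟩
  have hx₀ : 0 < ‖x‖ := hρ.trans ((le_max_left _ _).trans_lt hx.1)
  have hxT : T < Real.log ‖x‖ := (Real.lt_log_iff_exp_lt hx₀).2 ((le_max_right _ _).trans_lt hx.1)
  have h := hT (Real.log ‖x‖ + 1) (by linarith) x (by rw [add_sub_cancel_right, Real.exp_log hx₀])
  rw [mul_add, mul_one, Real.exp_add, mul_comm (Real.exp _),
    ← norm_rpow_eq_exp_mul_log (norm_pos_iff.1 hx₀), ← mul_assoc] at h
  exact h.trans (lintegral_mono_set inter_subset_left)

end DirichletEigenpair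

end RieszLowerBound

section LocalNonexistence

section Jensen

variable {q : ℝ}

lemma rpow_add_mul_sub_le_rpow {a v : ℝ} (hq : 1 ≤ q) (ha : 0 < a) (hv : 0 ≤ v) :
    a ^ q + q * a ^ (q - 1) * (v - a) ≤ v ^ q := by
  have h := one_add_mul_self_le_rpow_one_add (s := v / a - 1)
    (by linarith [div_nonneg hv ha.le]) hq
  rw [add_sub_cancel, Real.div_rpow hv ha.le, le_div_iff₀ (Real.rpow_pos_of_pos ha q)] at h
  refine le_trans (le_of_eq ?_) h
  rw [Real.rpow_sub_one ha.ne']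
  field_simp

lemma rpow_integral_mul_le {X : Type*} [MeasurableSpace X] {ν : Measure X} {w v : X → ℝ}
    (hq : 1 ≤ q) (hw₀ : 0 ≤ᵐ[ν] w) (hv₀ : 0 ≤ᵐ[ν] v) (hw : Integrable w ν)
    (hwv : Integrable (fun x => w x * v x) ν) (hwvq : Integrable (fun x => w x * v x ^ q) ν)
    (hw_pos : 0 < ∫ x, w x ∂ν) (hwv_pos : 0 < ∫ x, w x * v x ∂ν) :
    (∫ x, w x * v x ∂ν) ^ q ≤ (∫ x, w x ∂ν) ^ (q - 1) * ∫ x, w x * v x ^ q ∂ν := by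
  set I := ∫ x, w x ∂ν
  set J := ∫ x, w x * v x ∂ν
  have hmean : 0 < J / I := div_pos hwv_pos hw_pos
  have htangent : (J / I) ^ q * I ≤ ∫ x, w x * v x ^ q ∂ν := by
    have hint := (hw.mul_const ((J / I) ^ q - q * (J / I) ^ (q - 1) * (J / I))).add
      (hwv.mul_const (q * (J / I) ^ (q - 1)))
    calc (J / I) ^ q * I
        = I * ((J / I) ^ q - q * (J / I) ^ (q - 1) * (J / I)) + J * (q * (J / I) ^ (q - 1)) := by
          linear_combination q * (J / I) ^ (q - 1) * div_mul_cancel₀ J hw_pos.ne'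
      _ = ∫ x, w x * ((J / I) ^ q - q * (J / I) ^ (q - 1) * (J / I)) +
            w x * v x * (q * (J / I) ^ (q - 1)) ∂ν := by
          rw [integral_add (hw.mul_const _) (hwv.mul_const _), integral_mul_const,
            integral_mul_const]
      _ ≤ ∫ x, w x * v x ^ q ∂ν := by
          refine integral_mono_ae hint hwvq ?_
          filter_upwards [hw₀, hv₀] with x hwx hvx
          linear_combination mul_le_mul_of_nonneg_left (rpow_add_mul_sub_le_rpow hq hmean hvx) hwx
  calc J ^ q = I ^ (q - 1) * ((J / I) ^ q * I) := by
        rw [Real.div_rpow hwv_pos.le hw_pos.le, Real.rpow_sub_one hw_pos.ne']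
        field_simp
    _ ≤ I ^ (q - 1) * ∫ x, w x * v x ^ q ∂ν := by gcongr

end Jensen

variable {N : ℕ} {Ω : Set (Euc N)} {ρ lam1 μ d c σ q t : ℝ} {φ u v : Euc N → ℝ}

lemma logMean_nonneg {ν : Measure (Euc N)} {W : Euc N → ℝ} (m : ContDiffBump (0 : ℝ))
    (hW₀ : ∀ᵐ x ∂ν, 0 ≤ W x) : 0 ≤ logMean ν W m t :=
  integral_nonneg_of_ae <| hW₀.mono fun _ hx => mul_nonneg m.nonneg hx

lemma le_norm_rpow_of_mem_logAnnulus {r : ℝ} {x : Euc N} (hx₀ : x ≠ 0)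
    (hx : x ∈ logAnnulus N t r) (a : ℝ) : Real.exp (-(|a| * r)) * Real.exp (a * t) ≤ ‖x‖ ^ a := by
  have h := norm_rpow_le_of_mem_logAnnulus hx₀ hx (-a)
  rw [Real.rpow_neg (norm_nonneg x), abs_neg, ← Real.exp_add] at h
  rw [← Real.exp_add, ← inv_inv (‖x‖ ^ a), ← inv_inv (Real.exp _), ← Real.exp_neg]
  refine inv_anti₀ (inv_pos.2 (Real.rpow_pos_of_pos (norm_pos_iff.2 hx₀) a)) (h.trans_eq ?_)
  ring_nf

lemma homExt_add {x : Euc N} (hx : x ≠ 0) (a b : ℝ) :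
    homExt (a + b) φ x = ‖x‖ ^ a * homExt b φ x := by
  rw [homExt, homExt, Real.rpow_add (norm_pos_iff.2 hx), mul_assoc]

namespace DirichletEigenpair

variable (hφ : DirichletEigenpair N Ω lam1 φ)
include hφ

lemma exists_logMean_homExt_le (hΩ : IsOpen (cone N Ω)) (hρ : 0 < ρ) (m : ContDiffBump (0 : ℝ))
    (b : ℝ) : ∃ C > 0, ∀ t,
      logMean (volume.restrict (coneGT N ρ Ω)) (homExt b φ) m t ≤ C * Real.exp ((b + N) * t) := by
  refine ⟨Real.exp (|b| * m.rOut) *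
    (volume.real (Metric.closedBall (0 : Euc N) 1) * Real.exp (N * m.rOut)), ?_, fun t => ?_⟩
  · have : 0 < volume.real (Metric.closedBall (0 : Euc N) 1) :=
      ENNReal.toReal_pos (Metric.measure_closedBall_pos volume 0 one_pos).ne'
        measure_closedBall_lt_top.ne
    positivity
  have h := hφ.logMean_homExt_le_add_measureReal (t := t) hΩ hρ m (v := fun _ => 1) (d := 0)
    .empty (by simp) zero_le_one (fun _ _ => zero_le_one) (fun _ _ => (Real.rpow_zero _).ge)
    (fun _ _ _ => by simp) ((locallyIntegrable_const 1).mono_measure Measure.restrict_le_self) b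
  simp only [mul_one, zero_mul, Real.exp_zero, measureReal_empty, add_zero] at h
  refine h.trans ?_
  calc _ ≤ Real.exp (|b| * m.rOut) * Real.exp (b * t) *
        (volume.real (Metric.closedBall (0 : Euc N) 1) * Real.exp (N * m.rOut) *
          Real.exp (N * t)) := by
        gcongr
        exact measureReal_logAnnulus_le t m.rOut
    _ = _ := by rw [add_mul, Real.exp_add]; ring

lemma rpow_logMean_homExt_mul_le (hΩ : IsOpen (cone N Ω)) (hne : (cone N Ω).Nonempty)
    (hρ : 0 < ρ) (hq : 1 < q) (hu : ContinuousOn u (closure (coneGT N ρ Ω)))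
    (hu₀ : ∀ x ∈ coneGT N ρ Ω, 0 < u x) (m : ContDiffBump (0 : ℝ)) (b : ℝ)
    (ht : Real.log ρ < t) :
    logMean (volume.restrict (coneGT N ρ Ω)) (fun x => homExt b φ x * u x) m t ^ q ≤
      logMean (volume.restrict (coneGT N ρ Ω)) (homExt b φ) m t ^ (q - 1) *
        logMean (volume.restrict (coneGT N ρ Ω)) (fun x => homExt b φ x * u x ^ q) m t := by
  have hU := (isOpen_coneGT hρ hΩ).measurableSet
  have hb := continuousOn_homExt hρ hφ.contOn b
  have huq := hu.rpow_const fun x _ => Or.inr (zero_le_one.trans hq.le)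
  have hint {W : Euc N → ℝ} (hW : ContinuousOn W (closure (coneGT N ρ Ω))) :=
    integrable_logMean (locallyIntegrable_restrict_of_continuousOn_closure (ν := volume) hW)
      (ae_restrict_of_forall_mem hU fun x => ne_zero_of_mem_coneGT hρ)
      m.continuous m.hasCompactSupport t
  have hpos := hφ.logMean_homExt_pos hΩ hne hρ (v := fun _ => 1) (fun _ _ => one_pos)
    ((locallyIntegrable_const 1).mono_measure Measure.restrict_le_self) b m ht
  have hpos' := hφ.logMean_homExt_pos hΩ hne hρ hu₀
    (locallyIntegrable_restrict_of_continuousOn_closure hu) b m ht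
  simp only [mul_one] at hpos
  have hbu := hint (hb.fun_mul hu)
  have hbuq := hint (hb.fun_mul huq)
  simp only [logMean, ← mul_assoc] at hpos hpos' hbu hbuq ⊢
  exact rpow_integral_mul_le hq.le
    (ae_restrict_of_forall_mem hU fun x hx =>
      mul_nonneg m.nonneg (hφ.homExt_pos (coneGT_subset_cone hρ hx) b).le)
    (ae_restrict_of_forall_mem hU fun x hx => (hu₀ x hx).le) (hint hb) hbu hbuq hpos hpos'

lemma mul_logMean_homExt_le (hΩ : IsOpen (cone N Ω)) (hρ : 0 < ρ)
    (hv : ContinuousOn v (closure (coneGT N ρ Ω))) (hv₀ : ∀ x ∈ coneGT N ρ Ω, 0 ≤ v x)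
    (m : ContDiffBump (0 : ℝ)) (a b : ℝ) :
    Real.exp (-(|a| * m.rOut)) * Real.exp (a * t) *
        logMean (volume.restrict (coneGT N ρ Ω)) (fun x => homExt b φ x * v x) m t ≤
      logMean (volume.restrict (coneGT N ρ Ω)) (fun x => homExt (a + b) φ x * v x) m t := by
  have hU := (isOpen_coneGT hρ hΩ).measurableSet
  have hint (k : ℝ) := integrable_logMean (locallyIntegrable_restrict_of_continuousOn_closure
    (ν := volume) ((continuousOn_homExt hρ hφ.contOn k).fun_mul hv))
    (ae_restrict_of_forall_mem hU fun x => ne_zero_of_mem_coneGT hρ)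
    m.continuous m.hasCompactSupport t
  rw [logMean, logMean, ← integral_const_mul]
  refine setIntegral_mono_on ((hint b).const_mul _) (hint (a + b)) hU fun x hx => ?_
  have hx₀ := ne_zero_of_mem_coneGT hρ hx
  rw [homExt_add hx₀]
  by_cases hxt : x ∈ logAnnulus N t m.rOut
  · have hle := mul_le_mul_of_nonneg_right (le_norm_rpow_of_mem_logAnnulus hx₀ hxt a) <|
      mul_nonneg (m.nonneg (x := t - Real.log ‖x‖)) <|
        mul_nonneg (hφ.homExt_pos (coneGT_subset_cone hρ hx) b).le (hv₀ x hx)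
    linear_combination hle
  · simp only [bump_eq_zero_of_notMem_logAnnulus m hxt, zero_mul, mul_zero, le_refl]

lemma exists_mul_rpow_logMean_le (hΩ : IsOpen (cone N Ω)) (hne : (cone N Ω).Nonempty)
    (hρ : 0 < ρ) (hq : 1 < q) (hσ : 0 ≤ 2 - σ + d * (q - 1))
    (hu : ContinuousOn u (closure (coneGT N ρ Ω))) (hu₀ : ∀ x ∈ coneGT N ρ Ω, 0 < u x)
    (m : ContDiffBump (0 : ℝ)) :
    ∃ c > 0, ∀ t, 0 ≤ t → Real.log ρ < t →
      c * logMean (volume.restrict (coneGT N ρ Ω)) (fun x => homExt (-N - d) φ x * u x) m t ^ q ≤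
        logMean (volume.restrict (coneGT N ρ Ω))
          (fun x => homExt (2 - σ + (-N - d)) φ x * u x ^ q) m t := by
  have hU := (isOpen_coneGT hρ hΩ).measurableSet
  have huq := hu.rpow_const fun x _ => Or.inr (zero_le_one.trans hq.le)
  obtain ⟨C, hC, hW⟩ := hφ.exists_logMean_homExt_le hΩ hρ m (-N - d)
  refine ⟨C ^ (1 - q) * Real.exp (-(|2 - σ| * m.rOut)), by positivity, fun t ht₀ ht => ?_⟩
  set H := logMean (volume.restrict (coneGT N ρ Ω)) (fun x => homExt (-N - d) φ x * u x) m t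
  set F := logMean (volume.restrict (coneGT N ρ Ω)) (fun x => homExt (-N - d) φ x * u x ^ q) m t
  have hpos (x) (hx : x ∈ coneGT N ρ Ω) : 0 ≤ homExt (-N - d) φ x :=
    (hφ.homExt_pos (coneGT_subset_cone hρ hx) _).le
  have huq₀ (x) (hx : x ∈ coneGT N ρ Ω) : 0 ≤ u x ^ q := Real.rpow_nonneg (hu₀ x hx).le q
  have hF : 0 ≤ F := logMean_nonneg m <|
    ae_restrict_of_forall_mem hU fun x hx => mul_nonneg (hpos x hx) (huq₀ x hx)
  have hHF : H ^ q ≤ C ^ (q - 1) * Real.exp (-d * t) ^ (q - 1) * F := by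
    rw [← Real.mul_rpow hC.le (Real.exp_nonneg _)]
    refine (hφ.rpow_logMean_homExt_mul_le hΩ hne hρ hq hu hu₀ m _ ht).trans ?_
    gcongr
    · exact logMean_nonneg m (ae_restrict_of_forall_mem hU hpos)
    · exact (hW t).trans_eq (by ring_nf)
  have hdecay : Real.exp (-d * t) ^ (q - 1) ≤ Real.exp ((2 - σ) * t) := by
    rw [← Real.exp_mul, Real.exp_le_exp]
    linarith [mul_nonneg hσ ht₀]
  have hcancel : C ^ (1 - q) * C ^ (q - 1) = 1 := by
    rw [← Real.rpow_add hC, sub_add_sub_cancel, sub_self, Real.rpow_zero]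
  calc C ^ (1 - q) * Real.exp (-(|2 - σ| * m.rOut)) * H ^ q
      ≤ C ^ (1 - q) * Real.exp (-(|2 - σ| * m.rOut)) *
          (C ^ (q - 1) * Real.exp ((2 - σ) * t) * F) := by
        gcongr
        exact hHF.trans (by gcongr)
    _ = Real.exp (-(|2 - σ| * m.rOut)) * Real.exp ((2 - σ) * t) * F := by
        linear_combination
          Real.exp (-(|2 - σ| * m.rOut)) * Real.exp ((2 - σ) * t) * F * hcancel
    _ ≤ _ := hφ.mul_logMean_homExt_le hΩ hρ huq huq₀ m _ _

lemma not_forall_mul_rpow_le_hardyOp (hΩ : IsOpen (cone N Ω)) (hne : (cone N Ω).Nonempty)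
    (hρ : 0 < ρ) (hd : d * (d + N - 2) = lam1 - μ) (hd₀ : 2 * d + N - 2 ≤ 0) (hq : 1 < q)
    (hσ : 0 ≤ 2 - σ + d * (q - 1)) (hc : 0 < c) (hu : ContDiffOn ℝ 2 u (coneGT N ρ Ω))
    (hu' : ContinuousOn u (closure (coneGT N ρ Ω))) (hu₀ : ∀ x ∈ coneGT N ρ Ω, 0 < u x) :
    ¬ ∀ x ∈ coneGT N ρ Ω, c * (‖x‖ ^ (-σ) * u x ^ q) ≤ hardyOp μ u x := by
  intro hle
  let m : ContDiffBump (0 : ℝ) := ⟨1, 2, one_pos, one_lt_two⟩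
  have hm : ContDiff ℝ 2 m := m.contDiff
  obtain ⟨c', hc', hH⟩ := hφ.exists_mul_rpow_logMean_le hΩ hne hρ hq hσ hu' hu₀ m
  have hae : ∀ᵐ x ∂volume.restrict (coneGT N ρ Ω), x ≠ 0 :=
    ae_restrict_of_forall_mem (isOpen_coneGT hρ hΩ).measurableSet
      fun x => ne_zero_of_mem_coneGT hρ
  have huloc : LocallyIntegrable u (volume.restrict (coneGT N ρ Ω)) :=
    locallyIntegrable_restrict_of_continuousOn_closure hu'
  have hloc := locallyIntegrable_restrict_continuousOn_mul huloc
    (continuousOn_homExt hρ hφ.contOn (-N - d))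
  have hfloc : LocallyIntegrable (fun x => c * (‖x‖ ^ (-σ) * u x ^ q))
      (volume.restrict (coneGT N ρ Ω)) :=
    locallyIntegrable_restrict_of_continuousOn_closure <| continuousOn_const.mul <|
      (continuousOn_norm_rpow (fun x => ne_zero_of_mem_closure_coneGT hρ) _).mul <|
        hu'.rpow_const fun x _ => Or.inr (zero_le_one.trans hq.le)
  refine not_forall_deriv2_le_sub_mul_rpow (T := max 0 (Real.log ρ + 3)) (D := 2 - N - 2 * d)
    (by linarith) hq (mul_pos hc hc')
    (fun t _ => hasDerivAt_logMean hloc hae m.contDiff m.hasCompactSupport t)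
    (fun t _ => hasDerivAt_logMean hloc hae hm.deriv' m.hasCompactSupport.deriv t)
    (fun t ht => hφ.logMean_homExt_pos hΩ hne hρ hu₀ huloc _ m
      (by linarith [(le_max_right _ _).trans ht])) fun t ht => ?_
  have ht' : Real.log ρ + 3 ≤ t := (le_max_right _ _).trans ht
  have h := hφ.logMean_add_deriv2_le (k := 2 - N - d) (t := t) hΩ hρ (by rw [← hd]; ring) hu
    (fun x hx => (hu₀ x hx).le) huloc hfloc hle m (by change _ + 2 < t; linarith)
  have hpull : logMean (volume.restrict (coneGT N ρ Ω))
      (fun x => homExt (2 - N - d) φ x * (c * (‖x‖ ^ (-σ) * u x ^ q))) m t =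
      c * logMean (volume.restrict (coneGT N ρ Ω))
        (fun x => homExt (2 - σ + (-N - d)) φ x * u x ^ q) m t := by
    rw [logMean, logMean, ← integral_const_mul]
    refine integral_congr_ae (hae.mono fun x hx => ?_)
    simp only [show 2 - σ + (-N - d) = -σ + (2 - N - d) by ring, homExt_add hx]
    ring
  rw [hpull, show (2 - N - d - 2 : ℝ) = -N - d by ring] at h
  linear_combination h +
    c * hH t ((le_max_left _ _).trans ht) (by linarith)

end DirichletEigenpair

end LocalNonexistence

section CriticalExponent

variable {N : ℕ} {lam1 μ α q : ℝ}

lemma discrim_nonneg (hμ : μ ≤ CHconst N lam1) : 0 ≤ ((N : ℝ) - 2) ^ 2 + 4 * (lam1 - μ) := by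
  rw [CHconst] at hμ
  linarith

lemma gammaStar_mul_add (hμ : μ ≤ CHconst N lam1) :
    gammaStar N lam1 μ * (gammaStar N lam1 μ + N - 2) = lam1 - μ := by
  rw [gammaStar]
  linear_combination Real.sq_sqrt (discrim_nonneg hμ) / 4

lemma two_mul_gammaStar_add_le : 2 * gammaStar N lam1 μ + N - 2 ≤ 0 := by
  rw [gammaStar]
  linarith [Real.sqrt_nonneg (((N : ℝ) - 2) ^ 2 + 4 * (lam1 - μ))]

lemma gammaStar_neg (hN : 2 ≤ N)
    (hq : max 0 (2 - α) < (q - 1) * (-(gammaStar N lam1 μ))) : gammaStar N lam1 μ < 0 := by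
  have hN' : (2 : ℝ) ≤ N := by exact_mod_cast hN
  refine lt_of_le_of_ne (by linarith [two_mul_gammaStar_add_le (N := N) (lam1 := lam1) (μ := μ)])
    fun h => ?_
  rw [h, neg_zero, mul_zero] at hq
  exact hq.not_ge (le_max_left _ _)

end CriticalExponent

section Necessity

variable {N : ℕ} {Ω : Set (Euc N)} {ρ lam1 μ d α p q : ℝ} {φ u : Euc N → ℝ}

namespace IsPosSolE

lemma mul_rpow_le_hardyOp (hu : IsPosSolE N ρ μ α p q Ω u) {x : Euc N} (hx : x ∈ coneGT N ρ Ω) :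
    (rieszConv N α ρ Ω (fun y => u y ^ p) x).toReal * u x ^ q ≤ hardyOp μ u x := by
  simpa only [hardyOp, lap_eq_laplacian] using hu.2.2.2.2 x hx

lemma hardyOp_nonneg (hu : IsPosSolE N ρ μ α p q Ω u) {x : Euc N} (hx : x ∈ coneGT N ρ Ω) :
    0 ≤ hardyOp μ u x :=
  (mul_nonneg ENNReal.toReal_nonneg (Real.rpow_nonneg (hu.2.2.1 x hx).le q)).trans
    (hu.mul_rpow_le_hardyOp hx)

end IsPosSolE

namespace DirichletEigenpair

variable (hφ : DirichletEigenpair N Ω lam1 φ)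
include hφ

lemma sub_lt_of_isPosSolE (hΩ : IsOpen (cone N Ω)) (hne : (cone N Ω).Nonempty) (hρ : 0 < ρ)
    (hd : d * (d + N - 2) = lam1 - μ) (hd₀ : 2 * d + N - 2 ≤ 0) (hα : 0 ≤ α) (hp : 0 ≤ p)
    (hu : IsPosSolE N ρ μ α p q Ω u) : N - α < p * -d := by
  obtain ⟨x, hx⟩ : (coneGT N ρ Ω).Nonempty := ((measure_coneGT_inter_logAnnulus_pos hΩ hne hρ
    (lt_add_one _) one_pos).trans_le (measure_mono inter_subset_left)).ne' |>
      nonempty_of_measure_ne_zero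
  linarith [hφ.lt_of_rieszConv_ne_top hΩ hne hρ hd hd₀ hu.1 hu.2.2.1
    (fun y => hu.hardyOp_nonneg) hα hp (hu.2.2.2.1 x hx).ne]

lemma sub_add_two_lt_of_isPosSolE (hΩ : IsOpen (cone N Ω)) (hne : (cone N Ω).Nonempty)
    (hρ : 0 < ρ) (hd : d * (d + N - 2) = lam1 - μ) (hd₀ : 2 * d + N - 2 ≤ 0) (hα : 0 ≤ α)
    (hp : 0 ≤ p) (hq : 1 < q) (hu : IsPosSolE N ρ μ α p q Ω u) :
    N - α + 2 < (p + q - 1) * -d := by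
  by_contra! hle
  obtain ⟨K, hK, R, hR, hconv⟩ := hφ.exists_mul_rpow_le_rieszConv hΩ hne hρ hd hd₀ hu.1 hu.2.2.1
    (fun y => hu.hardyOp_nonneg) hα hp
  have hsub := coneGT_subset_coneGT (Ω := Ω) hR
  refine hφ.not_forall_mul_rpow_le_hardyOp hΩ hne (hρ.trans_le hR) hd hd₀ hq
    (σ := α - N - p * d) (by linarith) hK (hu.1.mono hsub) (hu.2.1.mono (closure_mono hsub))
    (fun x hx => hu.2.2.1 x (hsub hx)) fun x hx => ?_
  have huq := Real.rpow_nonneg (hu.2.2.1 x (hsub hx)).le q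
  calc K * (‖x‖ ^ (-(α - N - p * d)) * u x ^ q)
      = K * ‖x‖ ^ (N + p * d - α) * u x ^ q := by ring_nf
    _ ≤ (rieszConv N α ρ Ω (fun y => u y ^ p) x).toReal * u x ^ q := by
        gcongr
        exact (ENNReal.ofReal_le_iff_le_toReal (hu.2.2.2.1 x (hsub hx)).ne).1 (hconv x hx)
    _ ≤ hardyOp μ u x := hu.mul_rpow_le_hardyOp (hsub hx)

end DirichletEigenpair

end Necessity

section RieszPotential

lemma rpow_neg_mul_rpow_neg_le {a b s α : ℝ} (ha : 0 ≤ a) (hab : a ≤ b) (h₁ : 1 ≤ a + b)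
    (hα : 0 ≤ α) : a ^ (-s) * b ^ (-α) ≤ 3 ^ α * (a ^ (-s) * (1 + a) ^ (-α)) := by
  have hb : b ^ (-α) ≤ ((1 + a) / 3) ^ (-α) :=
    Real.rpow_le_rpow_of_nonpos (by positivity) (by linarith) (neg_nonpos.2 hα)
  rw [Real.div_rpow (by positivity) zero_le_three, Real.rpow_neg zero_le_three, div_inv_eq_mul]
    at hb
  linear_combination mul_le_mul_of_nonneg_left hb (Real.rpow_nonneg ha (-s))

variable {E : Type*} [NormedAddCommGroup E] {s α a b ρ : ℝ}

lemma norm_rpow_mul_norm_sub_rpow_le {x : E} (hx : ‖x‖ = 1) (hs : 0 ≤ s) (hα : 0 ≤ α) (y : E) :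
    ‖y‖ ^ (-s) * ‖x - y‖ ^ (-α) ≤ 3 ^ α * (‖y‖ ^ (-s) * (1 + ‖y‖) ^ (-α)) +
      3 ^ s * (‖x - y‖ ^ (-α) * (1 + ‖x - y‖) ^ (-s)) := by
  have htri : 1 ≤ ‖y‖ + ‖x - y‖ := by
    rw [← hx]
    exact norm_le_norm_add_norm_sub' x y
  rcases le_total ‖y‖ ‖x - y‖ with h | h
  · exact (rpow_neg_mul_rpow_neg_le (norm_nonneg y) h htri hα).trans
      (le_add_of_nonneg_right (by positivity))
  · rw [mul_comm (‖y‖ ^ (-s))]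
    exact (rpow_neg_mul_rpow_neg_le (norm_nonneg _) h (by rwa [add_comm]) hs).trans
      (le_add_of_nonneg_left (by positivity))

lemma norm_rpow_neg_le_mul_one_add_norm_rpow {y : E} (hρ : 0 < ρ) (hy : ρ < ‖y‖) (hb : 0 ≤ b) :
    ‖y‖ ^ (-b) ≤ (ρ / (1 + ρ)) ^ (-b) * (1 + ‖y‖) ^ (-b) := by
  rw [← Real.mul_rpow (by positivity) (by positivity)]
  refine Real.rpow_le_rpow_of_nonpos (by positivity) ?_ (neg_nonpos.2 hb)
  rw [div_mul_eq_mul_div, div_le_iff₀ (by positivity)]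
  linarith

variable [NormedSpace ℝ E] [FiniteDimensional ℝ E] [MeasurableSpace E] [BorelSpace E]
  (ν : Measure E) [ν.IsAddHaarMeasure]

lemma lintegral_eq_mul_lintegral_comp_smul (f : E → ℝ≥0∞) {r : ℝ} (hr : 0 < r) :
    ∫⁻ y, f y ∂ν = ENNReal.ofReal (r ^ Module.finrank ℝ E) * ∫⁻ y, f (r • y) ∂ν := by
  have hmap := (Homeomorph.smulOfNeZero r⁻¹ (inv_ne_zero hr.ne')).measurableEmbedding.lintegral_map
    (μ := ν) fun y : E => f (r • y)
  simp only [Homeomorph.smulOfNeZero_apply, smul_inv_smul₀ hr.ne'] at hmap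
  rw [← hmap, ← smul_eq_mul, ← lintegral_smul_measure]
  congr 1
  rw [Measure.map_addHaar_smul ν (inv_ne_zero hr.ne'), inv_pow, inv_inv, abs_of_pos (by positivity)]

lemma integrableOn_norm_rpow_neg (hρ : 0 < ρ) (hb : Module.finrank ℝ E < b) :
    IntegrableOn (fun y : E => ‖y‖ ^ (-b)) {y | ρ < ‖y‖} ν := by
  have hS : MeasurableSet {y : E | ρ < ‖y‖} := measurableSet_lt measurable_const measurable_norm
  refine Integrable.mono' ((integrable_one_add_norm (μ := ν) hb).const_mul
    ((ρ / (1 + ρ)) ^ (-b))).integrableOn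
      (measurable_norm.pow_const _).aestronglyMeasurable
    (ae_restrict_of_forall_mem hS fun y hy => ?_)
  rw [Real.norm_of_nonneg (by positivity)]
  exact norm_rpow_neg_le_mul_one_add_norm_rpow hρ hy ((Nat.cast_nonneg _).trans hb.le)

section Nontrivial

variable [Nontrivial E]

lemma integrableOn_ball_norm_rpow_neg (hs : s < Module.finrank ℝ E) (r : ℝ) :
    IntegrableOn (fun y : E => ‖y‖ ^ (-s)) (Metric.ball 0 r) ν := by
  refine (integrableOn_fun_norm_addHaar (μ := ν) (f := fun t : ℝ => t ^ (-s))).2 ?_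
  rcases le_or_gt r 0 with hr | hr
  · rw [Ioo_eq_empty hr.not_gt]
    exact integrableOn_empty
  have hpow := (intervalIntegral.integrableOn_Ioo_rpow_iff hr).2
    (show -1 < (Module.finrank ℝ E : ℝ) - 1 - s by linarith)
  refine hpow.congr_fun (fun t ht => ?_) measurableSet_Ioo
  simp only [smul_eq_mul]
  rw [← Real.rpow_natCast, ← Real.rpow_add ht.1, Nat.cast_sub Module.finrank_pos, Nat.cast_one,
    sub_eq_add_neg _ s]

lemma integrable_norm_rpow_mul_one_add_norm_rpow (ha : 0 ≤ a) (hb : 0 ≤ b)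
    (haE : a < Module.finrank ℝ E) (hab : Module.finrank ℝ E < a + b) :
    Integrable (fun y : E => ‖y‖ ^ (-a) * (1 + ‖y‖) ^ (-b)) ν := by
  have hball : Integrable ((Metric.ball 0 1).indicator fun y : E => ‖y‖ ^ (-a)) ν :=
    (integrable_indicator_iff Metric.isOpen_ball.measurableSet).2
      (integrableOn_ball_norm_rpow_neg ν haE 1)
  refine (hball.add ((integrable_one_add_norm (μ := ν) hab).const_mul (2 ^ a))).mono'
    (by fun_prop) (ae_of_all _ fun y => ?_)
  rw [Real.norm_of_nonneg (by positivity), Pi.add_apply]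
  by_cases hy : y ∈ Metric.ball (0 : E) 1
  · rw [indicator_of_mem hy]
    refine le_add_of_le_of_nonneg (mul_le_of_le_one_right (by positivity) ?_) (by positivity)
    exact Real.rpow_le_one_of_one_le_of_nonpos (le_add_of_nonneg_right (norm_nonneg y))
      (neg_nonpos.2 hb)
  · rw [indicator_of_notMem hy, zero_add]
    rw [mem_ball_zero_iff, not_lt] at hy
    have hle : ‖y‖ ^ (-a) ≤ ((1 + ‖y‖) / 2) ^ (-a) :=
      Real.rpow_le_rpow_of_nonpos (by positivity) (by linarith) (neg_nonpos.2 ha)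
    rw [Real.div_rpow (by positivity) zero_le_two, Real.rpow_neg zero_le_two, div_inv_eq_mul] at hle
    rw [neg_add, Real.rpow_add (by positivity)]
    linear_combination
      mul_le_mul_of_nonneg_right hle (show 0 ≤ (1 + ‖y‖) ^ (-b) by positivity)

lemma exists_lintegral_riesz_le_of_norm_eq_one (hs : 0 ≤ s) (hα : 0 ≤ α)
    (hsE : s < Module.finrank ℝ E) (hαE : α < Module.finrank ℝ E)
    (hsα : Module.finrank ℝ E < s + α) : ∃ C : ℝ, 0 ≤ C ∧ ∀ x : E, ‖x‖ = 1 →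
      ∫⁻ y, ENNReal.ofReal (‖y‖ ^ (-s) * ‖x - y‖ ^ (-α)) ∂ν ≤ ENNReal.ofReal C := by
  have hy := (integrable_norm_rpow_mul_one_add_norm_rpow ν hs hα hsE hsα).const_mul (3 ^ α)
  have hxy := (integrable_norm_rpow_mul_one_add_norm_rpow ν hα hs hαE
    (by rwa [add_comm])).const_mul (3 ^ s)
  refine ⟨(∫ y, 3 ^ α * (‖y‖ ^ (-s) * (1 + ‖y‖) ^ (-α)) ∂ν) +
    ∫ y, 3 ^ s * (‖y‖ ^ (-α) * (1 + ‖y‖) ^ (-s)) ∂ν, by positivity, fun x hx => ?_⟩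
  have hsum := hy.fun_add (hxy.comp_sub_left x)
  rw [← integral_sub_left_eq_self (fun y => 3 ^ s * (‖y‖ ^ (-α) * (1 + ‖y‖) ^ (-s))) ν x,
    ← integral_add hy (hxy.comp_sub_left x),
    ofReal_integral_eq_lintegral_ofReal hsum (ae_of_all _ fun y => by positivity)]
  exact lintegral_mono fun y =>
    ENNReal.ofReal_le_ofReal (norm_rpow_mul_norm_sub_rpow_le hx hs hα y)

lemma exists_lintegral_riesz_le (hs : 0 ≤ s) (hα : 0 ≤ α)
    (hsE : s < Module.finrank ℝ E) (hαE : α < Module.finrank ℝ E)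
    (hsα : Module.finrank ℝ E < s + α) : ∃ C : ℝ, 0 ≤ C ∧ ∀ x : E, x ≠ 0 →
      ∫⁻ y, ENNReal.ofReal (‖y‖ ^ (-s) * ‖x - y‖ ^ (-α)) ∂ν ≤
        ENNReal.ofReal (C * ‖x‖ ^ (Module.finrank ℝ E - s - α)) := by
  obtain ⟨C, hC, hunit⟩ := exists_lintegral_riesz_le_of_norm_eq_one ν hs hα hsE hαE hsα
  refine ⟨C, hC, fun x hx => ?_⟩
  have hr : 0 < ‖x‖ := norm_pos_iff.2 hx
  have hscale (y : E) : ENNReal.ofReal (‖‖x‖ • y‖ ^ (-s) * ‖x - ‖x‖ • y‖ ^ (-α)) =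
      ENNReal.ofReal (‖x‖ ^ (-s - α)) *
        ENNReal.ofReal (‖y‖ ^ (-s) * ‖‖x‖⁻¹ • x - y‖ ^ (-α)) := by
    have hsub : x - ‖x‖ • y = ‖x‖ • (‖x‖⁻¹ • x - y) := by
      rw [smul_sub, smul_inv_smul₀ hr.ne']
    rw [← ENNReal.ofReal_mul (by positivity), hsub, norm_smul, norm_smul, norm_norm,
      Real.mul_rpow hr.le (norm_nonneg _), Real.mul_rpow hr.le (norm_nonneg _),
      show -s - α = -s + -α from rfl, Real.rpow_add hr, mul_mul_mul_comm]
  rw [lintegral_eq_mul_lintegral_comp_smul ν _ hr]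
  simp only [hscale]
  rw [lintegral_const_mul' _ _ ENNReal.ofReal_ne_top, ← mul_assoc,
    ← ENNReal.ofReal_mul (by positivity), ← Real.rpow_natCast, ← Real.rpow_add hr, mul_comm C,
    ENNReal.ofReal_mul (by positivity),
    show (Module.finrank ℝ E : ℝ) + (-s - α) = Module.finrank ℝ E - s - α by ring]
  gcongr
  exact hunit _ (by rw [norm_smul, norm_inv, norm_norm, inv_mul_cancel₀ hr.ne'])

lemma exists_setLIntegral_riesz_le (hρ : 0 < ρ) (hs : 0 ≤ s) (hα : 0 ≤ α)
    (hsE : s < Module.finrank ℝ E) (hαE : α < Module.finrank ℝ E)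
    (hsα : Module.finrank ℝ E < s + α) (hsb : s ≤ b) : ∃ C : ℝ, 0 ≤ C ∧ ∀ x : E, x ≠ 0 →
      ∫⁻ y in {y | ρ < ‖y‖}, ENNReal.ofReal (‖y‖ ^ (-b) * ‖x - y‖ ^ (-α)) ∂ν ≤
        ENNReal.ofReal (C * ‖x‖ ^ (Module.finrank ℝ E - s - α)) := by
  obtain ⟨C, hC, hriesz⟩ := exists_lintegral_riesz_le ν hs hα hsE hαE hsα
  refine ⟨ρ ^ (s - b) * C, by positivity, fun x hx => ?_⟩
  rw [mul_assoc, ENNReal.ofReal_mul (by positivity)]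
  refine le_trans ?_ (mul_le_mul_right (hriesz x hx) _)
  rw [← lintegral_const_mul' _ _ ENNReal.ofReal_ne_top]
  refine (setLIntegral_mono (by fun_prop) fun y (hy : ρ < ‖y‖) => ?_).trans
    (setLIntegral_le_lintegral _ _)
  rw [← ENNReal.ofReal_mul (by positivity), ← mul_assoc]
  gcongr
  rw [show -b = (s - b) + -s by ring, Real.rpow_add (hρ.trans hy)]
  gcongr ?_ * _
  exact Real.rpow_le_rpow_of_nonpos hρ hy.le (by linarith)

lemma exists_rpow_decay_setLIntegral_riesz {c : ℝ} (hρ : 0 < ρ) (hα : 0 ≤ α)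
    (hαE : α < Module.finrank ℝ E) (hb : Module.finrank ℝ E - α < b) (hc : 2 - α < c)
    (hbc : Module.finrank ℝ E - α + 2 < b + c) : ∃ β : ℝ, 2 < β + c ∧ ∃ C : ℝ, 0 ≤ C ∧
      ∀ x : E, x ≠ 0 →
        ∫⁻ y in {y | ρ < ‖y‖}, ENNReal.ofReal (‖y‖ ^ (-b) * ‖x - y‖ ^ (-α)) ∂ν ≤
          ENNReal.ofReal (C * ‖x‖ ^ (-β)) := by
  rcases hα.eq_or_lt with rfl | hα₀
  · refine ⟨0, by linarith, ∫ y in {y | ρ < ‖y‖}, ‖y‖ ^ (-b) ∂ν, by positivity, fun x _ => ?_⟩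
    simp only [neg_zero, Real.rpow_zero, mul_one]
    rw [ofReal_integral_eq_lintegral_ofReal (integrableOn_norm_rpow_neg ν hρ (by linarith))
      (ae_of_all _ fun y => by positivity)]
  obtain ⟨β, hβ, hβ'⟩ : ∃ β, max 0 (2 - c) < β ∧ β < min α (b - (Module.finrank ℝ E - α)) :=
    exists_between (max_lt (lt_min hα₀ (by linarith)) (lt_min (by linarith) (by linarith)))
  obtain ⟨hβ₀, hβc⟩ := max_lt_iff.1 hβ
  obtain ⟨hβα, hβb⟩ := lt_min_iff.1 hβ'
  obtain ⟨C, hC, hriesz⟩ := exists_setLIntegral_riesz_le ν (s := Module.finrank ℝ E - α + β)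
    hρ (by linarith) hα (by linarith) hαE (by linarith) (b := b) (by linarith)
  refine ⟨β, by linarith, C, hC, fun x hx => (hriesz x hx).trans_eq ?_⟩
  congr 3
  ring

end Nontrivial

end RieszPotential

section Sufficiency

variable {N : ℕ} {Ω : Set (Euc N)} {ρ lam1 μ d ε α β p q A C : ℝ} {φ : Euc N → ℝ} {x : Euc N}

/-- The explicit supersolution `|x| ^ d Φ - ρ ^ ε |x| ^ (d - ε) Φ` of the Hardy operator; the second
term makes it vanish on `|x| = ρ` and gives `-Δ - μ / |x| ^ 2` of it a positive power of `|x|`. -/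
def hardyBarrier (ρ d ε : ℝ) (φ : Euc N → ℝ) : Euc N → ℝ :=
  homExt d φ - ρ ^ ε • homExt (d - ε) φ

lemma hardyBarrier_eq (hρ : 0 ≤ ρ) (hx : x ≠ 0) :
    hardyBarrier ρ d ε φ x = (1 - (ρ / ‖x‖) ^ ε) * homExt d φ x := by
  rw [hardyBarrier, Pi.sub_apply, Pi.smul_apply, smul_eq_mul, sub_eq_neg_add d, homExt_add hx,
    Real.rpow_neg (norm_nonneg x), Real.div_rpow hρ (norm_nonneg x)]
  ring

namespace DirichletEigenpair

variable (hφ : DirichletEigenpair N Ω lam1 φ)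
include hφ

lemma continuousOn_hardyBarrier (hρ : 0 < ρ) :
    ContinuousOn (hardyBarrier ρ d ε φ) (closure (coneGT N ρ Ω)) :=
  (continuousOn_homExt hρ hφ.contOn d).sub
    ((continuousOn_homExt hρ hφ.contOn (d - ε)).const_smul (ρ ^ ε))

lemma contDiffOn_hardyBarrier (hΩ : IsOpen (cone N Ω)) :
    ContDiffOn ℝ 2 (hardyBarrier ρ d ε φ) (cone N Ω) :=
  (hφ.contDiffOn_homExt hΩ d).sub ((hφ.contDiffOn_homExt hΩ (d - ε)).const_smul (ρ ^ ε))

lemma hardyBarrier_pos (hρ : 0 < ρ) (hε : 0 < ε) (hx : x ∈ coneGT N ρ Ω) :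
    0 < hardyBarrier ρ d ε φ x := by
  rw [hardyBarrier_eq hρ.le (ne_zero_of_mem_coneGT hρ hx)]
  refine mul_pos (sub_pos.2 ?_) (hφ.homExt_pos (coneGT_subset_cone hρ hx) d)
  exact Real.rpow_lt_one (by positivity) ((div_lt_one (hρ.trans hx.1)).2 hx.1) hε

lemma hardyBarrier_le (hρ : 0 < ρ) (hx : x ∈ coneGT N ρ Ω) :
    hardyBarrier ρ d ε φ x ≤ homExt d φ x := by
  rw [hardyBarrier_eq hρ.le (ne_zero_of_mem_coneGT hρ hx)]
  exact mul_le_of_le_one_left (hφ.homExt_pos (coneGT_subset_cone hρ hx) d).le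
    (sub_le_self 1 (by positivity))

lemma hardyOp_hardyBarrier (hΩ : IsOpen (cone N Ω)) (hd : d * (d + N - 2) = lam1 - μ)
    (hx : x ∈ cone N Ω) : hardyOp μ (hardyBarrier ρ d ε φ) x =
      ρ ^ ε * (ε * (ε - (2 * d + N - 2))) * homExt (d - ε - 2) φ x := by
  have hsmooth (a : ℝ) : ContDiffAt ℝ 2 (homExt a φ) x :=
    (hφ.contDiffOn_homExt hΩ a).contDiffAt (hΩ.mem_nhds hx)
  have hcorr : ContDiffAt ℝ 2 (ρ ^ ε • homExt (d - ε) φ) x :=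
    (hsmooth (d - ε)).const_smul (ρ ^ ε)
  rw [hardyBarrier, hardyOp_sub μ (hsmooth d) hcorr, hardyOp_smul μ _ (hsmooth (d - ε)),
    hφ.hardyOp_homExt hΩ hx, hφ.hardyOp_homExt hΩ hx]
  linear_combination (ρ ^ ε * homExt (d - ε - 2) φ x - homExt (d - 2) φ x) * hd

lemma smul_hardyBarrier_rpow_le_norm_rpow (hρ : 0 < ρ) (hε : 0 < ε) (hA : 0 ≤ A) (hp : 0 ≤ p)
    (hx : x ∈ coneGT N ρ Ω) :
    (A • hardyBarrier ρ d ε φ) x ^ p ≤ A ^ p * ‖x‖ ^ (-(p * -d)) := by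
  have hb := (hφ.hardyBarrier_pos (d := d) hρ hε hx).le
  have hle : hardyBarrier ρ d ε φ x ≤ ‖x‖ ^ d :=
    (hφ.hardyBarrier_le hρ hx).trans (hφ.homExt_le_norm_rpow (coneGT_subset_cone hρ hx) d)
  rw [Pi.smul_apply, smul_eq_mul, Real.mul_rpow hA hb, show -(p * -d) = d * p by ring,
    Real.rpow_mul (norm_nonneg x)]
  gcongr

lemma smul_hardyBarrier_rpow_le_homExt (hρ : 0 < ρ) (hε : 0 < ε) (hA : 0 ≤ A) (hq : 1 ≤ q)
    (hx : x ∈ coneGT N ρ Ω) :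
    (A • hardyBarrier ρ d ε φ) x ^ q ≤ A ^ q * homExt (d * q) φ x := by
  have hb := (hφ.hardyBarrier_pos (d := d) hρ hε hx).le
  have hxc := coneGT_subset_cone hρ hx
  rw [Pi.smul_apply, smul_eq_mul, Real.mul_rpow hA hb]
  gcongr
  calc hardyBarrier ρ d ε φ x ^ q ≤ homExt d φ x ^ q := by
        gcongr
        exact hφ.hardyBarrier_le hρ hx
    _ = ‖x‖ ^ (d * q) * angularExt φ x ^ q := by
        rw [homExt, Real.mul_rpow (by positivity) (hφ.angularExt_pos hxc).le,
          Real.rpow_mul (norm_nonneg x)]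
    _ ≤ homExt (d * q) φ x := by
        rw [homExt]
        gcongr
        exact Real.rpow_le_self_of_le_one (hφ.angularExt_pos hxc).le (hφ.angularExt_le_one hxc) hq

lemma rieszConv_smul_hardyBarrier_le (hρ : 0 < ρ) (hε : 0 < ε) (hA : 0 ≤ A) (hp : 0 ≤ p)
    (hconv : ∫⁻ y in {y : Euc N | ρ < ‖y‖}, ENNReal.ofReal (‖y‖ ^ (-(p * -d)) * ‖x - y‖ ^ (-α)) ≤
      ENNReal.ofReal (C * ‖x‖ ^ (-β))) :
    rieszConv N α ρ Ω (fun y => (A • hardyBarrier ρ d ε φ) y ^ p) x ≤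
      ENNReal.ofReal (A ^ p * (C * ‖x‖ ^ (-β))) := by
  rw [ENNReal.ofReal_mul (by positivity)]
  refine le_trans ?_ (mul_le_mul_right hconv _)
  rw [← lintegral_const_mul' _ _ ENNReal.ofReal_ne_top]
  refine (setLIntegral_mono (by fun_prop) fun y hy => ?_).trans
    (lintegral_mono_set fun y (hy : y ∈ coneGT N ρ Ω) => hy.1)
  rw [← ENNReal.ofReal_mul (by positivity), ← mul_assoc]
  gcongr
  exact hφ.smul_hardyBarrier_rpow_le_norm_rpow hρ hε hA hp hy

lemma isPosSolE_smul_hardyBarrier (hΩ : IsOpen (cone N Ω)) (hρ : 0 < ρ)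
    (hd : d * (d + N - 2) = lam1 - μ) (hp : 0 ≤ p) (hq : 1 ≤ q) (hε : 0 < ε)
    (hεβ : ε = β + (q - 1) * -d - 2) (hA : 0 < A) (hC : 0 ≤ C)
    (hAC : A ^ (p + q - 1) * C ≤ ρ ^ ε * (ε * (ε - (2 * d + N - 2))))
    (hconv : ∀ x : Euc N, x ≠ 0 → ∫⁻ y in {y : Euc N | ρ < ‖y‖},
      ENNReal.ofReal (‖y‖ ^ (-(p * -d)) * ‖x - y‖ ^ (-α)) ≤ ENNReal.ofReal (C * ‖x‖ ^ (-β))) :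
    IsPosSolE N ρ μ α p q Ω (A • hardyBarrier ρ d ε φ) := by
  have hsub := coneGT_subset_cone (Ω := Ω) hρ
  have hpos (x) (hx : x ∈ coneGT N ρ Ω) : 0 < (A • hardyBarrier ρ d ε φ) x :=
    mul_pos hA (hφ.hardyBarrier_pos hρ hε hx)
  have hriesz (x) (hx : x ∈ coneGT N ρ Ω) :=
    hφ.rieszConv_smul_hardyBarrier_le hρ hε hA.le hp (hconv x (ne_zero_of_mem_coneGT hρ hx))
  refine ⟨((hφ.contDiffOn_hardyBarrier hΩ).const_smul A).mono hsub,
    (hφ.continuousOn_hardyBarrier hρ).const_smul A, hpos,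
    fun x hx => (hriesz x hx).trans_lt ENNReal.ofReal_lt_top, fun x hx => ?_⟩
  have hhardy : -lap N (A • hardyBarrier ρ d ε φ) x - μ * ‖x‖ ^ (-(2 : ℝ)) *
      (A • hardyBarrier ρ d ε φ) x = hardyOp μ (A • hardyBarrier ρ d ε φ) x := by
    rw [hardyOp, lap_eq_laplacian]
  rw [hhardy, hardyOp_smul μ A ((hφ.contDiffOn_hardyBarrier hΩ).contDiffAt
    (hΩ.mem_nhds (hsub hx))), hφ.hardyOp_hardyBarrier hΩ hd (hsub hx)]
  have hw := (hφ.homExt_pos (hsub hx) (d - ε - 2)).le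
  calc _ ≤ A ^ p * (C * ‖x‖ ^ (-β)) * (A ^ q * homExt (d * q) φ x) :=
        mul_le_mul (ENNReal.toReal_le_of_le_ofReal (by positivity) (hriesz x hx))
          (hφ.smul_hardyBarrier_rpow_le_homExt hρ hε hA.le hq hx)
          (Real.rpow_nonneg (hpos x hx).le q) (by positivity)
    _ = A * (A ^ (p + q - 1) * C * homExt (d - ε - 2) φ x) := by
        rw [show d - ε - 2 = -β + d * q by rw [hεβ]; ring,
          homExt_add (ne_zero_of_mem_coneGT hρ hx), Real.rpow_sub_one hA.ne', Real.rpow_add hA]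
        field_simp
    _ ≤ _ := by gcongr

lemma exists_isPosSolE (hΩ : IsOpen (cone N Ω)) (hne : (cone N Ω).Nonempty) (hρ : 0 < ρ)
    (hd : d * (d + N - 2) = lam1 - μ) (hd₀ : 2 * d + N - 2 ≤ 0) (hα : 0 ≤ α) (hαN : α < N)
    (hp : 0 ≤ p) (hq : 1 < q) (hqd : 2 - α < (q - 1) * -d) (hpd : N - α < p * -d)
    (hpqd : N - α + 2 < (p + q - 1) * -d) : ∃ u : Euc N → ℝ, IsPosSolE N ρ μ α p q Ω u := by
  have : Nontrivial (Euc N) := nontrivial_of_ne hne.some 0 hne.some_mem.1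
  obtain ⟨β, hβ, C, hC, hconv⟩ := exists_rpow_decay_setLIntegral_riesz (E := Euc N) volume hρ hα
    (by simpa using hαN) (b := p * -d) (by simpa using hpd) hqd
    (by simpa using (by linarith : N - α + 2 < p * -d + (q - 1) * -d))
  obtain ⟨ε, hε⟩ : ∃ ε, ε = β + (q - 1) * -d - 2 := ⟨_, rfl⟩
  have hε₀ : 0 < ε := by linarith
  have hK : 0 < ρ ^ ε * (ε * (ε - (2 * d + N - 2))) :=
    mul_pos (by positivity) (mul_pos hε₀ (by linarith))
  obtain ⟨A, hA, hAC⟩ : ∃ A : ℝ, 0 < A ∧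
      A ^ (p + q - 1) * C ≤ ρ ^ ε * (ε * (ε - (2 * d + N - 2))) := by
    refine ⟨(ρ ^ ε * (ε * (ε - (2 * d + N - 2))) / (C + 1)) ^ (p + q - 1)⁻¹, by positivity, ?_⟩
    rw [Real.rpow_inv_rpow (by positivity) (by linarith), div_mul_eq_mul_div,
      div_le_iff₀ (by positivity)]
    gcongr
    linarith
  exact ⟨_, hφ.isPosSolE_smul_hardyBarrier hΩ hρ hd hp hq.le hε₀ hε hA hC hAC hconv⟩

end DirichletEigenpair

end Sufficiency

section Existence

lemma IsConeDomain.cone_nonempty {N : ℕ} {Ω : Set (Euc N)} (hΩ : IsConeDomain N Ω) :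
    (cone N Ω).Nonempty := by
  obtain ⟨ω, hω⟩ := hΩ.2.1.nonempty
  have hnorm : ‖ω‖ = 1 := mem_sphere_zero_iff_norm.1 (hΩ.1 hω)
  exact ⟨ω, norm_ne_zero_iff.1 (by simp [hnorm]), by simpa [hnorm]⟩

theorem existence_iff_supercritical_general {N : ℕ} {Ω : Set (Euc N)} (hΩ : IsOpen (cone N Ω))
    (hne : (cone N Ω).Nonempty) {lam1 : ℝ} {φ : Euc N → ℝ} (hφ : DirichletEigenpair N Ω lam1 φ)
    {α p q ρ μ : ℝ} (hα : 0 ≤ α) (hαN : α < N) (hp : 0 ≤ p) (hρ : 0 < ρ)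
    (hμ : μ ≤ CHconst N lam1) (hγ : gammaStar N lam1 μ < 0)
    (hq : max 0 (2 - α) < (q - 1) * -gammaStar N lam1 μ) :
    (∃ u : Euc N → ℝ, IsPosSolE N ρ μ α p q Ω u) ↔
      N - α < p * -gammaStar N lam1 μ ∧ N - α + 2 < (p + q - 1) * -gammaStar N lam1 μ := by
  have hd := gammaStar_mul_add hμ
  have hd₀ := two_mul_gammaStar_add_le (N := N) (lam1 := lam1) (μ := μ)
  have hq₁ : 1 < q :=
    sub_pos.1 (pos_of_mul_pos_left ((le_max_left _ _).trans_lt hq) (neg_pos.2 hγ).le)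
  refine ⟨fun ⟨u, hu⟩ => ⟨hφ.sub_lt_of_isPosSolE hΩ hne hρ hd hd₀ hα hp hu,
    hφ.sub_add_two_lt_of_isPosSolE hΩ hne hρ hd hd₀ hα hp hq₁ hu⟩, fun ⟨hpγ, hpqγ⟩ => ?_⟩
  exact hφ.exists_isPosSolE hΩ hne hρ hd hd₀ hα hαN hp hq₁ (max_lt_iff.1 hq).2 hpγ hpqγ

end Existence

end

/-- for `μ ≤ C_{H,Ω}` and `(q-1)·|γ_*| > max{0, 2-α}`, the inequality `(E)` has
a positive solution in `C_Ω^ρ` iff `p·|γ_*| > N - α` and `(p+q-1)·|γ_*| > N - α + 2`. -/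
theorem existence_iff_supercritical
    (N : ℕ) (hN : 2 ≤ N) (Ω : Set (Euc N)) (hΩ : IsConeDomain N Ω)
    (lam1 : ℝ) (φ : Euc N → ℝ) (hphi : DirichletEigenpair N Ω lam1 φ)
    (α p q ρ μ : ℝ) (hα : 0 ≤ α) (hαN : α < N) (hp : 0 < p) (hρ : 0 < ρ)
    (hμ : μ ≤ CHconst N lam1)
    (hq : max 0 (2 - α) < (q - 1) * (-(gammaStar N lam1 μ))) :
    (∃ u : Euc N → ℝ, IsPosSolE N ρ μ α p q Ω u) ↔
      ((N : ℝ) - α < p * (-(gammaStar N lam1 μ)) ∧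
        (N : ℝ) - α + 2 < (p + q - 1) * (-(gammaStar N lam1 μ))) := by
  exact existence_iff_supercritical_general (isOpen_cone hΩ.2.2) hΩ.cone_nonempty hphi hα hαN hp.le
    hρ hμ (gammaStar_neg hN hq) hq
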